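/- Let CS be a constant specification and Γ ⊆ Form^Ag. Then the following are equivalent: (i) Γ is CS-consistent; (ii) Γ is satisfiable in Mod_CS(𝓣^Ag_mixsucc), the class of CS-normal jstit models based on mixed successor temporal frames for Ag; (iii) Γ is satisfiable in Mod↓_CS(𝓣^Ag_mixsucc), the subclass of unirelational such models. -/

import Mathlib

/-! Preliminaries: temporal frames, stit frames, jstit frames, the language of
JA-STIT, jstit models, satisfaction, and the Hilbert system Σ_D(CS). -/

/-- A temporal frame: a nonempty set of moments with a partial order satisfying
historical connection and no backward branching. -/
structure TemporalFrame (Mo : Type) : Type where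
  le : Mo → Mo → Prop
  le_refl : ∀ m, le m m
  le_antisymm : ∀ {m m'}, le m m' → le m' m → m = m'
  le_trans : ∀ {m1 m2 m3}, le m1 m2 → le m2 m3 → le m1 m3
  nonempty : Nonempty Mo
  hist_conn : ∀ m m1, ∃ m2, le m2 m ∧ le m2 m1
  no_backward : ∀ m m1 m2, le m1 m → le m2 m → le m1 m2 ∨ le m2 m1

namespace TemporalFrame

variable {Mo : Type} (T : TemporalFrame Mo)

/-- The strict companion of the temporal order. -/
def lt (m m' : Mo) : Prop := T.le m m' ∧ m ≠ m'

/-- A history is a maximal chain of moments w.r.t. the temporal order. -/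
def IsHistory (h : Set Mo) : Prop :=
  IsChain T.le h ∧ ∀ h' : Set Mo, IsChain T.le h' → h ⊆ h' → h' = h

/-- `T.H m` is the set of histories passing through the moment `m`. -/
def H (m : Mo) : Set (Set Mo) := { h | T.IsHistory h ∧ m ∈ h }

/-- Histories `h` and `g` are undivided at `m`. -/
def Undiv (m : Mo) (h g : Set Mo) : Prop := ∃ m', T.lt m m' ∧ m' ∈ h ∧ m' ∈ g

/-- `m'` is an immediate successor of `m`. -/
def Next (m m' : Mo) : Prop := T.lt m m' ∧ ∀ m'', T.lt m'' m' → T.le m'' m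

/-- Mixed successor condition on (the temporal part of) a frame. -/
def MixSucc : Prop :=
  ∀ m m1 : Mo,
    (T.lt m m1 → ∃ m2, T.le m2 m1 ∧ T.Next m m2) ∨
    (∀ h ∈ T.H m, ∀ g ∈ T.H m, T.Undiv m h g)

end TemporalFrame

/-- A stit frame for an agent community `Ag`: a temporal frame together with a choice
function assigning to each moment and agent a partition of the histories through that
moment, subject to no choice between undivided histories and independence of agents. -/
structure StitFrame (Mo : Type) (Ag : Type) extends TemporalFrame Mo where
  choice : Mo → Ag → Set (Set (Set Mo))
  choice_cell_nonempty : ∀ m j C, C ∈ choice m j → C.Nonempty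
  choice_cell_sub : ∀ m j C, C ∈ choice m j → C ⊆ toTemporalFrame.H m
  choice_cover : ∀ m j h, h ∈ toTemporalFrame.H m → ∃ C ∈ choice m j, h ∈ C
  choice_disjoint : ∀ m j C C', C ∈ choice m j → C' ∈ choice m j →
    (C ∩ C').Nonempty → C = C'
  no_choice_undiv : ∀ m j h h', h ∈ toTemporalFrame.H m → h' ∈ toTemporalFrame.H m →
    toTemporalFrame.Undiv m h h' → ∀ C ∈ choice m j, h ∈ C → h' ∈ C
  independence : ∀ m (f : Ag → Set (Set Mo)), (∀ j, f j ∈ choice m j) →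
    (⋂ j, f j).Nonempty

/-- A justification stit (jstit) frame for `Ag`: a stit frame together with two
epistemic preorders `R ⊆ R_e`, with the temporal order included in `R`. -/
structure JstitFrame (Mo : Type) (Ag : Type) extends StitFrame Mo Ag where
  R : Mo → Mo → Prop
  Re : Mo → Mo → Prop
  R_refl : ∀ m, R m m
  R_trans : ∀ {m1 m2 m3}, R m1 m2 → R m2 m3 → R m1 m3
  Re_refl : ∀ m, Re m m
  Re_trans : ∀ {m1 m2 m3}, Re m1 m2 → Re m2 m3 → Re m1 m3
  R_sub_Re : ∀ {m m'}, R m m' → Re m m'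
  le_sub_R : ∀ {m m'}, le m m' → R m m'

namespace JstitFrame

variable {Mo : Type} {Ag : Type} (F : JstitFrame Mo Ag)

/-- The family `Θ_m` of subsets of the set of moments associated with a moment `m`. -/
def Theta (m : Mo) : Set (Set Mo) :=
  { S | m ∈ S ∧
    (∀ m1 m2, m1 ∈ S → F.Re m1 m2 → m2 ∈ S) ∧
    (∀ m1, (∀ h ∈ F.toTemporalFrame.H m1,
        ∃ m2 ∈ h, F.toTemporalFrame.Next m1 m2 ∧ m2 ∈ S) → m1 ∈ S) ∧
    (∀ m1, m1 ∈ S →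
      (∀ m2, F.toTemporalFrame.lt m2 m1 →
        ∃ m3, F.toTemporalFrame.lt m2 m3 ∧ F.toTemporalFrame.lt m3 m1) →
      ∃ m4, F.toTemporalFrame.lt m4 m1 ∧ m4 ∈ S) }

/-- A jstit frame is unirelational iff `R_e ⊆ R`. -/
def Unirelational : Prop := ∀ m m', F.Re m m' → F.R m m'

/-- Regularity of a jstit frame. -/
def Regular : Prop :=
  ∀ m m1 : Mo, F.toTemporalFrame.lt m m1 →
    (∃ S : Set Mo,
      (∀ m0, F.toTemporalFrame.lt m m0 → F.le m0 m1 → S ∈ F.Theta m0) ∧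
      m ∉ S ∧
      ∃ h' ∈ F.toTemporalFrame.H m,
        (∀ g ∈ F.toTemporalFrame.H m1, ¬ F.toTemporalFrame.Undiv m h' g) ∧
        (∀ m' ∈ h', F.toTemporalFrame.Next m m' → m' ∉ S)) →
    ∃ m2, F.le m2 m1 ∧ F.toTemporalFrame.Next m m2

end JstitFrame

/-- Proof polynomials over proof variables `PVar` and proof constants `PConst`. -/
inductive Pol (PVar PConst : Type) : Type
  | var : PVar → Pol PVar PConst
  | const : PConst → Pol PVar PConst
  | plus : Pol PVar PConst → Pol PVar PConst → Pol PVar PConst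
  | times : Pol PVar PConst → Pol PVar PConst → Pol PVar PConst
  | bang : Pol PVar PConst → Pol PVar PConst

/-- Formulas of JA-STIT. -/
inductive Form (Ag PVar PConst PropVar : Type) : Type
  | pv : PropVar → Form Ag PVar PConst PropVar
  | and : Form Ag PVar PConst PropVar → Form Ag PVar PConst PropVar →
      Form Ag PVar PConst PropVar
  | neg : Form Ag PVar PConst PropVar → Form Ag PVar PConst PropVar
  | stit : Ag → Form Ag PVar PConst PropVar → Form Ag PVar PConst PropVar
  | box : Form Ag PVar PConst PropVar → Form Ag PVar PConst PropVar
  | proves : Pol PVar PConst → Form Ag PVar PConst PropVar → Form Ag PVar PConst PropVar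
  | know : Form Ag PVar PConst PropVar → Form Ag PVar PConst PropVar
  | ann : Pol PVar PConst → Form Ag PVar PConst PropVar

namespace Form

variable {Ag PVar PConst PropVar : Type}

/-- Implication, defined as usual from `¬` and `∧`. -/
def imp (A B : Form Ag PVar PConst PropVar) : Form Ag PVar PConst PropVar :=
  neg (and A (neg B))

/-- Disjunction, defined as usual. -/
def or (A B : Form Ag PVar PConst PropVar) : Form Ag PVar PConst PropVar :=
  neg (and (neg A) (neg B))

/-- The dual `◇` of the historical necessity modality. -/
def dia (A : Form Ag PVar PConst PropVar) : Form Ag PVar PConst PropVar :=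
  neg (box (neg A))

/-- Falsum, defined as usual. -/
def bot [Inhabited PropVar] : Form Ag PVar PConst PropVar :=
  and (pv default) (neg (pv default))

end Form

/-- Conjunction of a nonempty list of formulas (head plus tail). -/
def andList {Ag PVar PConst PropVar : Type} :
    Form Ag PVar PConst PropVar → List (Form Ag PVar PConst PropVar) →
      Form Ag PVar PConst PropVar
  | A, [] => A
  | A, B :: L => Form.and A (andList B L)

/-- Disjunction of a list of formulas. -/
def bigOr {Ag PVar PConst PropVar : Type} [Inhabited PropVar] :
    List (Form Ag PVar PConst PropVar) → Form Ag PVar PConst PropVar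
  | [] => Form.bot
  | [A] => A
  | A :: B :: L => Form.or A (bigOr (B :: L))

/-- A classical propositional tautology: a formula true under every Boolean valuation
commuting with `∧` and `¬` (all other formulas being treated as atoms). -/
def Tautology {Ag PVar PConst PropVar : Type} (A : Form Ag PVar PConst PropVar) : Prop :=
  ∀ v : Form Ag PVar PConst PropVar → Bool,
    (∀ B C, v (Form.and B C) = (v B && v C)) →
    (∀ B, v (Form.neg B) = !v B) →
    v A = true

/-- The axiom schemes (A0)–(A9) of Σ_D. -/
inductive Ax {Ag PVar PConst PropVar : Type} : Form Ag PVar PConst PropVar → Prop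
  -- (A0) classical propositional tautologies
  | a0 {A} : Tautology A → Ax A
  -- (A1) S5 axioms for □
  | boxK {A B} : Ax (Form.imp (Form.box (Form.imp A B))
      (Form.imp (Form.box A) (Form.box B)))
  | boxT {A} : Ax (Form.imp (Form.box A) A)
  | box4 {A} : Ax (Form.imp (Form.box A) (Form.box (Form.box A)))
  | box5 {A} : Ax (Form.imp (Form.neg (Form.box A)) (Form.box (Form.neg (Form.box A))))
  -- (A1) S5 axioms for each [j]
  | stitK {j : Ag} {A B} : Ax (Form.imp (Form.stit j (Form.imp A B))
      (Form.imp (Form.stit j A) (Form.stit j B)))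
  | stitT {j : Ag} {A} : Ax (Form.imp (Form.stit j A) A)
  | stit4 {j : Ag} {A} : Ax (Form.imp (Form.stit j A) (Form.stit j (Form.stit j A)))
  | stit5 {j : Ag} {A} : Ax (Form.imp (Form.neg (Form.stit j A))
      (Form.stit j (Form.neg (Form.stit j A))))
  -- (A2)
  | a2 {j : Ag} {A} : Ax (Form.imp (Form.box A) (Form.stit j A))
  -- (A3), for pairwise distinct agents
  | a3 {p : Ag × Form Ag PVar PConst PropVar} {L : List (Ag × Form Ag PVar PConst PropVar)} :
      (((p :: L).map Prod.fst).Nodup) →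
      Ax (Form.imp
        (andList (Form.dia (Form.stit p.1 p.2)) (L.map fun q => Form.dia (Form.stit q.1 q.2)))
        (Form.dia (andList (Form.stit p.1 p.2) (L.map fun q => Form.stit q.1 q.2))))
  -- (A4)
  | a4 {s t : Pol PVar PConst} {A B} : Ax (Form.imp (Form.proves s (Form.imp A B))
      (Form.imp (Form.proves t A) (Form.proves (Pol.times s t) B)))
  -- (A5)
  | a5 {t : Pol PVar PConst} {A} : Ax (Form.imp (Form.proves t A)
      (Form.and (Form.proves (Pol.bang t) (Form.proves t A)) (Form.know A)))
  -- (A6)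
  | a6 {s t : Pol PVar PConst} {A} : Ax (Form.imp
      (Form.or (Form.proves s A) (Form.proves t A)) (Form.proves (Pol.plus s t) A))
  -- (A7) S4 axioms for K
  | knowK {A B} : Ax (Form.imp (Form.know (Form.imp A B))
      (Form.imp (Form.know A) (Form.know B)))
  | knowT {A} : Ax (Form.imp (Form.know A) A)
  | know4 {A} : Ax (Form.imp (Form.know A) (Form.know (Form.know A)))
  -- (A8)
  | a8 {A} : Ax (Form.imp (Form.know A) (Form.box (Form.know (Form.box A))))
  -- (A9)
  | a9 {t : Pol PVar PConst} : Ax (Form.imp (Form.box (Form.ann t))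
      (Form.know (Form.box (Form.ann t))))

/-- Iterated prefixes `c_n : … : c_1 : A` of instances `A` of the axiom schemes. -/
inductive ConstIter {Ag PVar PConst PropVar : Type} : Form Ag PVar PConst PropVar → Prop
  | base {c : PConst} {A} : Ax A → ConstIter (Form.proves (Pol.const c) A)
  | step {c : PConst} {B} : ConstIter B → ConstIter (Form.proves (Pol.const c) B)

/-- A constant specification: a set of formulas of the form `c_n : … : c_1 : A` with `A`
an instance of (A0)–(A9), closed under deleting the outermost constant. -/
def IsConstSpec {Ag PVar PConst PropVar : Type}
    (CS : Set (Form Ag PVar PConst PropVar)) : Prop :=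
  (∀ B ∈ CS, ConstIter B) ∧
  ∀ (c c' : PConst) (B : Form Ag PVar PConst PropVar),
    Form.proves (Pol.const c) (Form.proves (Pol.const c') B) ∈ CS →
    Form.proves (Pol.const c') B ∈ CS

/-- Provability in Σ_D(CS): axioms (A0)–(A9), modus ponens (R1), K-necessitation (R2),
the rule (R_D) and the rule (R_CS). -/
inductive Proves {Ag PVar PConst PropVar : Type} [Inhabited PropVar]
    (CS : Set (Form Ag PVar PConst PropVar)) : Form Ag PVar PConst PropVar → Prop
  | ax {A} : Ax A → Proves CS A
  | mp {A B} : Proves CS (Form.imp A B) → Proves CS A → Proves CS B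
  | nec {A} : Proves CS A → Proves CS (Form.know A)
  | rd {A : Form Ag PVar PConst PropVar} {ts ss : List (Pol PVar PConst)}
      (hne : ts ++ ss ≠ []) :
      Proves CS (Form.imp (Form.know A)
        (bigOr ((ts.map fun t => Form.neg (Form.box (Form.ann t))) ++
                (ss.map fun s => Form.box (Form.ann s))))) →
      Proves CS (Form.imp (Form.know A)
        (bigOr ((ts.map fun t => Form.neg (Form.ann t)) ++
                (ss.map fun s => Form.ann s))))
  | rcs {B} : B ∈ CS → Proves CS B

/-- Γ is consistent in Σ_D(CS): no finite nonempty conjunction of members of Γ provably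
implies falsum. -/
def CSConsistent {Ag PVar PConst PropVar : Type} [Inhabited PropVar]
    (CS Γ : Set (Form Ag PVar PConst PropVar)) : Prop :=
  ¬ ∃ (A : Form Ag PVar PConst PropVar) (L : List (Form Ag PVar PConst PropVar)),
      A ∈ Γ ∧ (∀ B ∈ L, B ∈ Γ) ∧ Proves CS (Form.imp (andList A L) Form.bot)

/-- A jstit model for `Ag`: a jstit frame together with `Act`, an admissible evidence
function `E` and an evaluation `V`, subject to the semantical constraints. -/
structure JstitModel (Mo : Type) (Ag PVar PConst PropVar : Type)
    extends JstitFrame Mo Ag where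
  act : Mo → Set Mo → Set (Pol PVar PConst)
  ev : Mo → Pol PVar PConst → Set (Form Ag PVar PConst PropVar)
  val : PropVar → Set (Mo × Set Mo)
  -- monotonicity of evidence
  ev_mono : ∀ m m' t, Re m m' → ev m t ⊆ ev m' t
  -- evidence closure properties
  ev_app : ∀ m s t A B, Form.imp A B ∈ ev m s → A ∈ ev m t → B ∈ ev m (Pol.times s t)
  ev_sum_left : ∀ m s t, ev m s ⊆ ev m (Pol.plus s t)
  ev_sum_right : ∀ m s t, ev m t ⊆ ev m (Pol.plus s t)
  ev_bang : ∀ m t A, A ∈ ev m t → Form.proves t A ∈ ev m (Pol.bang t)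
  -- expansion of presented proofs
  expansion : ∀ m m' h, toTemporalFrame.lt m' m → h ∈ toTemporalFrame.H m →
    act m' h ⊆ act m h
  -- no new proofs guaranteed
  no_new : ∀ m t, (∀ h ∈ toTemporalFrame.H m, t ∈ act m h) →
    ∃ m' h, toTemporalFrame.lt m' m ∧ h ∈ toTemporalFrame.H m ∧ t ∈ act m' h
  -- presenting a new proof makes histories divide
  divide : ∀ m h h', h ∈ toTemporalFrame.H m → h' ∈ toTemporalFrame.H m →
    toTemporalFrame.Undiv m h h' → act m h = act m h'
  -- presented proofs are epistemically transparent
  transparent : ∀ m m' t, Re m m' → (∀ h ∈ toTemporalFrame.H m, t ∈ act m h) →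
    ∀ h' ∈ toTemporalFrame.H m', t ∈ act m' h'

namespace JstitModel

variable {Mo Ag PVar PConst PropVar : Type}

/-- `Act_m`, the set of proofs presented at `m` under every history through `m`. -/
def ActM (M : JstitModel Mo Ag PVar PConst PropVar) (m : Mo) : Set (Pol PVar PConst) :=
  { t | ∀ h ∈ M.toTemporalFrame.H m, t ∈ M.act m h }

/-- The satisfaction relation for jstit models. -/
def Sat (M : JstitModel Mo Ag PVar PConst PropVar) :
    Form Ag PVar PConst PropVar → Mo → Set Mo → Prop
  | Form.pv p, m, h => (m, h) ∈ M.val p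
  | Form.and A B, m, h => M.Sat A m h ∧ M.Sat B m h
  | Form.neg A, m, h => ¬ M.Sat A m h
  | Form.stit j A, m, h => ∀ h' C, C ∈ M.choice m j → h ∈ C → h' ∈ C → M.Sat A m h'
  | Form.box A, m, _ => ∀ h' ∈ M.toTemporalFrame.H m, M.Sat A m h'
  | Form.know A, m, _ => ∀ m' h', M.R m m' → h' ∈ M.toTemporalFrame.H m' → M.Sat A m' h'
  | Form.proves t A, m, _ => A ∈ M.ev m t ∧
      ∀ m' h', M.Re m m' → h' ∈ M.toTemporalFrame.H m' → M.Sat A m' h'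
  | Form.ann t, m, h => t ∈ M.act m h

/-- Validity of a formula in a jstit model. -/
def Valid (M : JstitModel Mo Ag PVar PConst PropVar)
    (A : Form Ag PVar PConst PropVar) : Prop :=
  ∀ m h, h ∈ M.toTemporalFrame.H m → M.Sat A m h

end JstitModel

/-- CS-normality of a jstit model. -/
def CSNormal {Mo Ag PVar PConst PropVar : Type}
    (CS : Set (Form Ag PVar PConst PropVar))
    (M : JstitModel Mo Ag PVar PConst PropVar) : Prop :=
  ∀ (c : PConst) (m : Mo) (A : Form Ag PVar PConst PropVar),
    Form.proves (Pol.const c) A ∈ CS → A ∈ M.ev m (Pol.const c)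

/-!
Soundness: at a moment whose histories are not all undivided, every history passes through a
successor, along which the proofs just presented have become settled; at all other moments
presenting a proof along one history already settles it. In both cases a clause about `□Et` known at
a moment turns into the same clause about `Et`, which is the rule (R_D).

Completeness: the moments of the canonical model are finite chains of steps. A step pairs a maximal
consistent theory `here`, true along the histories that make the step, with a theory `next` that
knows whatever `here` knows and in which `□Et` holds exactly if `here` contains `Et`. Compactness
turns (R_D) into the existence of such a `next`, and (A3) into the independence of agents, for
infinitely many agents as well. The root of the tree carries no theory; no proof is guaranteed
there because some maximal theory contains no formula `□Et`, as a model without proofs shows.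
-/

/-! ### Boolean valuations -/

section Valuations

variable {Ag PVar PConst PropVar : Type} {A B : Form Ag PVar PConst PropVar}
  {L : List (Form Ag PVar PConst PropVar)} {v : Form Ag PVar PConst PropVar → Prop}

/-- A Boolean valuation in the sense of `Tautology`, with values in `Prop`: formulas that are
neither conjunctions nor negations are treated as atoms. Both satisfaction at a moment-history pair
and membership in a maximal theory are valuations. -/
structure IsValuation (v : Form Ag PVar PConst PropVar → Prop) : Prop where
  and_iff : ∀ {A B}, v (Form.and A B) ↔ v A ∧ v B
  neg_iff : ∀ {A}, v (Form.neg A) ↔ ¬ v A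

theorem tautology_iff : Tautology A ↔ ∀ v, IsValuation v → v A := by
  classical
  constructor
  · intro hA v hv
    simpa using hA (fun B => decide (v B)) (by simp [hv.and_iff]) (by simp [hv.neg_iff])
  · intro hA v hand hneg
    exact hA (fun B => v B = true) ⟨by simp [hand], by simp [hneg]⟩

namespace IsValuation

theorem imp_iff (hv : IsValuation v) : v (Form.imp A B) ↔ (v A → v B) := by
  rw [Form.imp, hv.neg_iff, hv.and_iff, hv.neg_iff, not_and_not_right]

theorem or_iff (hv : IsValuation v) : v (Form.or A B) ↔ v A ∨ v B := by
  rw [Form.or, hv.neg_iff, hv.and_iff, hv.neg_iff, hv.neg_iff, or_iff_not_and_not]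

theorem andList_iff (hv : IsValuation v) : v (andList A L) ↔ ∀ B ∈ A :: L, v B := by
  induction L generalizing A with
  | nil => simp [andList]
  | cons B L ih => rw [andList, hv.and_iff, ih, List.forall_mem_cons (p := v) (a := A)]

variable [Inhabited PropVar]

theorem not_bot (hv : IsValuation v) : ¬ v Form.bot := by
  rw [Form.bot, hv.and_iff, hv.neg_iff]
  exact and_not_self

theorem bigOr_iff (hv : IsValuation v) : v (bigOr L) ↔ ∃ B ∈ L, v B := by
  induction L using bigOr.induct with
  | case1 => simp [bigOr, hv.not_bot]
  | case2 A => simp [bigOr]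
  | case3 A B L ih => rw [bigOr, hv.or_iff, ih, List.exists_mem_cons_iff v A]

end IsValuation

namespace Form

variable [Inhabited PropVar]

/-- Verum. -/
def top : Form Ag PVar PConst PropVar := neg bot

/-- The conjunction of a possibly empty list of formulas. -/
def conj (L : List (Form Ag PVar PConst PropVar)) : Form Ag PVar PConst PropVar := andList top L

/-- The clause `¬f t₁ ∨ … ∨ ¬f tₙ ∨ f s₁ ∨ … ∨ f sₖ`. The rule (R_D) passes from the clause for
`f t = □Et` to the clause for `f t = Et`. -/
def clause {ι : Type} (f : ι → Form Ag PVar PConst PropVar) (ts ss : List ι) :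
    Form Ag PVar PConst PropVar :=
  bigOr ((ts.map fun t => neg (f t)) ++ ss.map f)

end Form

namespace IsValuation

variable [Inhabited PropVar]

theorem conj_iff (hv : IsValuation v) : v (Form.conj L) ↔ ∀ B ∈ L, v B := by
  rw [Form.conj, hv.andList_iff, List.forall_mem_cons, Form.top, hv.neg_iff]
  exact and_iff_right hv.not_bot

theorem clause_iff {ι : Type} {f : ι → Form Ag PVar PConst PropVar} {ts ss : List ι}
    (hv : IsValuation v) :
    v (Form.clause f ts ss) ↔ (∃ t ∈ ts, ¬ v (f t)) ∨ ∃ s ∈ ss, v (f s) := by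
  simp only [Form.clause, hv.bigOr_iff, List.mem_append, or_and_right, exists_or,
    List.mem_map, exists_exists_and_eq_and, hv.neg_iff]

end IsValuation

theorem Proves.of_valuation [Inhabited PropVar] {CS : Set (Form Ag PVar PConst PropVar)}
    (h : ∀ v, IsValuation v → v A) : Proves CS A :=
  .ax (.a0 (tautology_iff.2 h))

end Valuations

/-! ### Histories and choices -/

namespace TemporalFrame

variable {Mo : Type} {T : TemporalFrame Mo} {m m' : Mo} {g h : Set Mo}

theorem H_nonempty (T : TemporalFrame Mo) (m : Mo) : (T.H m).Nonempty := by
  obtain ⟨h, hh, hm⟩ := (IsChain.singleton (r := T.le) (a := m)).exists_maxChain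
  exact ⟨h, ⟨hh.1, fun h' hc hs => (hh.2 hc hs).symm⟩, hm rfl⟩

theorem le_or_lt_of_mem (hh : h ∈ T.H m) (hm' : m' ∈ h) : T.le m' m ∨ T.lt m m' := by
  by_cases hne : m = m'
  · exact .inl (hne ▸ T.le_refl m)
  · exact (hh.1.1 hh.2 hm' hne).symm.imp_right fun hle => ⟨hle, hne⟩

theorem mem_of_le (hh : h ∈ T.H m) (hle : T.le m' m) : m' ∈ h := by
  have hchain : IsChain T.le (insert m' h) := hh.1.1.insert fun b hb _ =>
    (le_or_lt_of_mem hh hb).elim (T.no_backward m m' b hle)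
      fun hlt => .inl (T.le_trans hle hlt.1)
  exact hh.1.2 _ hchain (Set.subset_insert _ _) ▸ Set.mem_insert _ _

theorem mem_H_of_le (hh : h ∈ T.H m) (hle : T.le m' m) : h ∈ T.H m' :=
  ⟨hh.1, mem_of_le hh hle⟩

theorem exists_lt_of_ne (hh : h ∈ T.H m) (hg : g ∈ T.H m) (hne : g ≠ h) :
    ∃ m' ∈ h, T.lt m m' := by
  by_contra! hlast
  refine hne (hh.1.2 g hg.1.1 fun x hx => mem_of_le hg ?_)
  exact (le_or_lt_of_mem hh hx).resolve_right (hlast x hx)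

end TemporalFrame

namespace StitFrame

variable {Mo Ag : Type}

/-- `F.SameCell m j g h`: the histories `g` and `h` lie in the same choice cell of the agent `j`
at `m`. -/
def SameCell (F : StitFrame Mo Ag) (m : Mo) (j : Ag) (g h : Set Mo) : Prop :=
  ∃ C ∈ F.choice m j, g ∈ C ∧ h ∈ C

namespace SameCell

variable {F : StitFrame Mo Ag} {m : Mo} {j : Ag} {f g h : Set Mo}

theorem refl (hh : h ∈ F.H m) : F.SameCell m j h h :=
  let ⟨C, hC, hhC⟩ := F.choice_cover m j h hh
  ⟨C, hC, hhC, hhC⟩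

theorem symm : F.SameCell m j g h → F.SameCell m j h g
  | ⟨C, hC, hg, hh⟩ => ⟨C, hC, hh, hg⟩

theorem trans : F.SameCell m j f g → F.SameCell m j g h → F.SameCell m j f h
  | ⟨C, hC, hf, hg⟩, ⟨D, hD, hg', hh⟩ =>
    ⟨C, hC, hf, F.choice_disjoint m j C D hC hD ⟨g, hg, hg'⟩ ▸ hh⟩

theorem mem_right : F.SameCell m j g h → h ∈ F.H m
  | ⟨C, hC, _, hh⟩ => F.choice_cell_sub m j C hC hh

end SameCell

theorem exists_forall_sameCell (F : StitFrame Mo Ag) {m : Mo} {g : Ag → Set Mo}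
    (hg : ∀ j, g j ∈ F.H m) : ∃ h, ∀ j, F.SameCell m j (g j) h := by
  choose f hf hgf using fun j => F.choice_cover m j (g j) (hg j)
  obtain ⟨h, hh⟩ := F.independence m f hf
  exact ⟨h, fun j => ⟨f j, hf j, hgf j, Set.mem_iInter.1 hh j⟩⟩

/-- The stit frame in which the choice cells of `j` at `m` are the sets of histories through `m`
with the same value of `label m j`. -/
def ofLabel {α : Type} (T : TemporalFrame Mo) (label : Mo → Ag → Set Mo → α)
    (undiv : ∀ {m j g h}, g ∈ T.H m → h ∈ T.H m → T.Undiv m g h → label m j g = label m j h)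
    (indep : ∀ m (g : Ag → Set Mo), (∀ j, g j ∈ T.H m) →
      ∃ h ∈ T.H m, ∀ j, label m j h = label m j (g j)) :
    StitFrame Mo Ag where
  toTemporalFrame := T
  choice m j := (fun g => {h ∈ T.H m | label m j h = label m j g}) '' T.H m
  choice_cell_nonempty := by
    rintro m j _ ⟨g, hg, rfl⟩
    exact ⟨g, hg, rfl⟩
  choice_cell_sub := by
    rintro m j _ ⟨g, -, rfl⟩
    exact Set.sep_subset _ _
  choice_cover m j h hh := ⟨_, ⟨h, hh, rfl⟩, hh, rfl⟩
  choice_disjoint := by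
    rintro m j _ _ ⟨g, -, rfl⟩ ⟨g', -, rfl⟩ ⟨h, ⟨-, hg⟩, -, hg'⟩
    simp only [← hg, ← hg']
  no_choice_undiv := by
    rintro m j h h' hh hh' hu _ ⟨g, -, rfl⟩ ⟨-, hg⟩
    exact ⟨hh', (undiv hh hh' hu).symm.trans hg⟩
  independence m f hf := by
    choose g hg hfg using hf
    obtain ⟨h, hh, hlabel⟩ := indep m g hg
    exact ⟨h, Set.mem_iInter.2 fun j => hfg j ▸ ⟨hh, hlabel j⟩⟩

theorem sameCell_ofLabel {α : Type} {T : TemporalFrame Mo} {label : Mo → Ag → Set Mo → α}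
    {undiv indep} {m : Mo} {j : Ag} {g h : Set Mo} :
    (ofLabel T label undiv indep).SameCell m j g h ↔
      g ∈ T.H m ∧ h ∈ T.H m ∧ label m j g = label m j h := by
  constructor
  · rintro ⟨_, ⟨f, -, rfl⟩, hg, hh⟩
    exact ⟨hg.1, hh.1, hg.2.trans hh.2.symm⟩
  · rintro ⟨hg, hh, hlabel⟩
    exact ⟨_, ⟨h, hh, rfl⟩, ⟨hg, hlabel⟩, hh, rfl⟩

end StitFrame

/-! ### Trees of chains -/

/-- The finite chains of the relation `r`, written with the latest entry first: `r b a` says that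
the entry `b` may follow the entry `a`. They are the moments of the discrete tree
`ChainTree.frame r`. -/
def ChainTree {α : Type} (r : α → α → Prop) : Type := {l : List α // l.IsChain r}

namespace ChainTree

variable {α : Type} {r : α → α → Prop} {m m' m₁ m₂ : ChainTree r} {a b : α}
  {g h : Set (ChainTree r)}

/-- The temporal frame of all chains of `r`, in which the past of a chain is formed by its initial
stretches; the empty chain is the root. -/
def frame (r : α → α → Prop) : TemporalFrame (ChainTree r) where
  le m m' := m.1 <:+ m'.1
  le_refl _ := List.suffix_rfl
  le_antisymm h h' := Subtype.ext (h.eq_of_length (h.length_le.antisymm h'.length_le))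
  le_trans h h' := h.trans h'
  nonempty := ⟨⟨[], .nil⟩⟩
  hist_conn _ _ := ⟨⟨[], .nil⟩, List.nil_suffix, List.nil_suffix⟩
  no_backward _ _ _ h h' := List.suffix_or_suffix_of_suffix h h'

/-- The latest entry of a chain, absent exactly at the root. -/
def last? (m : ChainTree r) : Option α := m.1.head?

/-- `m.Child a m'`: the chain `m'` extends `m` by the single entry `a`. -/
def Child (m : ChainTree r) (a : α) (m' : ChainTree r) : Prop := m'.1 = a :: m.1

theorem exists_child (h : ∀ b ∈ m.last?, r a b) : ∃ m', m.Child a m' :=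
  ⟨⟨a :: m.1, List.isChain_cons.2 ⟨h, m.2⟩⟩, rfl⟩

theorem exists_last?_eq (a : α) : ∃ m : ChainTree r, m.last? = some a :=
  ⟨⟨[a], .singleton a⟩, rfl⟩

theorem exists_child_eq (h : a ∈ m.last?) : ∃ m' : ChainTree r, m'.Child a m := by
  obtain ⟨l, hl⟩ := List.head?_eq_some_iff.1 h
  exact ⟨⟨l, m.2.suffix (hl ▸ List.suffix_cons a l)⟩, hl⟩

namespace Child

theorem last?_eq (hc : m.Child a m') : m'.last? = some a := by rw [last?, hc, List.head?_cons]

theorem rel (hc : m.Child a m') : ∀ b ∈ m.last?, r a b :=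
  (List.isChain_cons.1 (hc ▸ m'.2)).1

theorem next (hc : m.Child a m') : (frame r).Next m m' := by
  refine ⟨⟨⟨[a], hc.symm⟩, ?_⟩, fun m₁ hlt => ?_⟩
  · rintro rfl
    exact List.cons_ne_self a m.1 hc.symm
  · exact (List.suffix_cons_iff.1 (hc ▸ hlt.1)).resolve_left fun heq =>
      hlt.2 (Subtype.ext (heq.trans hc.symm))

theorem entry_unique (hc₁ : m.Child a m₁) (hc₂ : m.Child b m₂) (hh : (frame r).IsHistory h)
    (hm₁ : m₁ ∈ h) (hm₂ : m₂ ∈ h) : a = b := by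
  have hlen : m₁.1.length = m₂.1.length := by rw [hc₁, hc₂]; rfl
  have heq : m₁.1 = m₂.1 := by
    obtain rfl | hne := eq_or_ne m₁ m₂
    · rfl
    · exact (hh.1 hm₁ hm₂ hne).elim (·.eq_of_length hlen) (·.eq_of_length hlen.symm |>.symm)
  exact (List.cons.inj (hc₁.symm.trans (heq.trans hc₂))).1

end Child

theorem exists_child_le (hlt : (frame r).lt m m₁) :
    ∃ a m', m.Child a m' ∧ (frame r).le m' m₁ := by
  obtain ⟨⟨p, hp⟩, hne⟩ := hlt
  obtain rfl | ⟨q, a, rfl⟩ := List.eq_nil_or_concat p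
  · exact (hne (Subtype.ext hp)).elim
  · have hsuffix : (a :: m.1) <:+ m₁.1 := ⟨q, by rw [← hp, List.concat_append]⟩
    exact ⟨a, ⟨a :: m.1, m₁.2.suffix hsuffix⟩, rfl, hsuffix⟩

theorem mixSucc_frame (r : α → α → Prop) : (frame r).MixSucc := fun _ _ =>
  .inl fun hlt =>
    let ⟨_, m', hc, hle⟩ := exists_child_le hlt
    ⟨m', hle, hc.next⟩

theorem reflTransGen_child_of_le (hle : (frame r).le m m') :
    Relation.ReflTransGen (fun m m' => ∃ a, m.Child a m') m m' := by
  obtain ⟨p, hp⟩ := hle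
  induction p generalizing m' with
  | nil => exact Subtype.ext hp ▸ .refl
  | cons a p ih =>
    have hchain : (p ++ m.1).IsChain r := m'.2.suffix (hp ▸ List.suffix_cons a _)
    exact (ih (m' := ⟨p ++ m.1, hchain⟩) rfl).tail ⟨a, hp.symm⟩

section StepAt

variable [Nonempty α]

/-- The entry by which the history `h` continues the chain `m`. -/
noncomputable def stepAt (m : ChainTree r) (h : Set (ChainTree r)) : α :=
  Classical.epsilon fun a => ∃ m' ∈ h, m.Child a m'

theorem stepAt_eq (hh : (frame r).IsHistory h) (hm' : m' ∈ h) (hc : m.Child a m') :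
    m.stepAt h = a := by
  obtain ⟨m₁, hm₁, hc₁⟩ := Classical.epsilon_spec (p := fun a => ∃ m' ∈ h, m.Child a m')
    ⟨a, m', hm', hc⟩
  exact hc₁.entry_unique hc hh hm₁ hm'

theorem exists_stepAt_eq (ha : ∀ b ∈ m.last?, r a b) :
    ∃ h ∈ (frame r).H m, m.stepAt h = a := by
  obtain ⟨m', hc⟩ := exists_child ha
  obtain ⟨h, hh⟩ := (frame r).H_nonempty m'
  exact ⟨h, TemporalFrame.mem_H_of_le hh hc.next.1.1, stepAt_eq hh.1 hh.2 hc⟩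

theorem exists_child_eq_stepAt_of_lt (hh : h ∈ (frame r).H m') (hlt : (frame r).lt m m') :
    ∃ m₁, m.Child (m.stepAt h) m₁ ∧ (frame r).le m₁ m' := by
  obtain ⟨a, m₁, hc, hle⟩ := exists_child_le hlt
  exact ⟨m₁, stepAt_eq hh.1 (TemporalFrame.mem_of_le hh hle) hc ▸ hc, hle⟩

theorem stepAt_eq_of_undiv (hg : g ∈ (frame r).H m) (hh : h ∈ (frame r).H m)
    (hu : (frame r).Undiv m g h) : m.stepAt g = m.stepAt h := by
  obtain ⟨m', hlt, hmg, hmh⟩ := hu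
  obtain ⟨m₁, hc, hle⟩ := exists_child_eq_stepAt_of_lt ⟨hh.1, hmh⟩ hlt
  exact stepAt_eq hg.1 (TemporalFrame.mem_of_le ⟨hg.1, hmg⟩ hle) hc

theorem exists_child_mem (hr : ∀ a, ∃ b, r b a) (hh : h ∈ (frame r).H m) :
    ∃ a, ∃ m' ∈ h, m.Child a m' := by
  obtain ⟨a, ha⟩ : ∃ a, ∀ b ∈ m.last?, r a b := by
    cases m.last? with
    | none => exact ⟨Classical.arbitrary α, by simp⟩
    | some b => exact (hr b).imp fun a ha => by simpa using ha
  obtain ⟨m₀, hc₀⟩ := exists_child ha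
  obtain ⟨g, hg⟩ := (frame r).H_nonempty m₀
  have hgm : g ∈ (frame r).H m := TemporalFrame.mem_H_of_le hg hc₀.next.1.1
  by_cases hgh : g = h
  · exact ⟨a, m₀, hgh ▸ hg.2, hc₀⟩
  · obtain ⟨m₁, hm₁, hlt⟩ := TemporalFrame.exists_lt_of_ne hh hgm hgh
    obtain ⟨b, m', hc, hle⟩ := exists_child_le hlt
    exact ⟨b, m', TemporalFrame.mem_of_le ⟨hh.1, hm₁⟩ hle, hc⟩

theorem stepAt_rel (hr : ∀ a, ∃ b, r b a) (hh : h ∈ (frame r).H m) :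
    ∀ b ∈ m.last?, r (m.stepAt h) b := by
  obtain ⟨a, m', hm', hc⟩ := exists_child_mem hr hh
  exact stepAt_eq hh.1 hm' hc ▸ hc.rel

end StepAt

end ChainTree

/-! ### Soundness -/

namespace JstitModel

section Soundness

variable {Mo Ag PVar PConst PropVar : Type} {M : JstitModel Mo Ag PVar PConst PropVar}
  {A B : Form Ag PVar PConst PropVar} {m : Mo} {h : Set Mo}

theorem sat_isValuation (M : JstitModel Mo Ag PVar PConst PropVar) (m : Mo) (h : Set Mo) :
    IsValuation fun A => M.Sat A m h :=
  ⟨Iff.rfl, Iff.rfl⟩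

theorem sat_imp : M.Sat (Form.imp A B) m h ↔ (M.Sat A m h → M.Sat B m h) :=
  (M.sat_isValuation m h).imp_iff

theorem sat_dia : M.Sat (Form.dia A) m h ↔ ∃ g ∈ M.H m, M.Sat A m g := by
  simp only [Form.dia, Sat, not_forall, not_not, exists_prop]

theorem sat_stit_iff {j : Ag} :
    M.Sat (Form.stit j A) m h ↔ ∀ g, M.SameCell m j h g → M.Sat A m g :=
  ⟨fun hA g ⟨C, hC, hh, hg⟩ => hA g C hC hh hg, fun hA g C hC hh hg => hA g ⟨C, hC, hh, hg⟩⟩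

theorem sat_stit_of_sameCell {j : Ag} {g : Set Mo} (hgh : M.SameCell m j g h)
    (hA : M.Sat (Form.stit j A) m g) : M.Sat (Form.stit j A) m h :=
  sat_stit_iff.2 fun f hf => sat_stit_iff.1 hA f (hgh.trans hf)

theorem exists_forall_sat_stit {L : List (Ag × Form Ag PVar PConst PropVar)}
    (hL : (L.map Prod.fst).Nodup)
    (hsat : ∀ q ∈ L, ∃ g ∈ M.H m, M.Sat (Form.stit q.1 q.2) m g) :
    ∃ h ∈ M.H m, ∀ q ∈ L, M.Sat (Form.stit q.1 q.2) m h := by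
  obtain ⟨h₀, hh₀⟩ := M.H_nonempty m
  have hchoose : ∀ j, ∃ g ∈ M.H m, ∀ q ∈ L, q.1 = j → M.Sat (Form.stit q.1 q.2) m g := by
    intro j
    by_cases hj : ∃ q ∈ L, q.1 = j
    · obtain ⟨q, hq, rfl⟩ := hj
      obtain ⟨g, hg, hsat⟩ := hsat q hq
      refine ⟨g, hg, fun q' hq' heq => ?_⟩
      rwa [List.inj_on_of_nodup_map hL hq' hq heq]
    · exact ⟨h₀, hh₀, fun q hq heq => (hj ⟨q, hq, heq⟩).elim⟩
  choose g hg hgsat using hchoose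
  obtain ⟨h, hh⟩ := M.exists_forall_sameCell hg
  rcases L with - | ⟨p, L⟩
  · exact ⟨h₀, hh₀, by simp⟩
  · exact ⟨h, (hh p.1).mem_right, fun q hq => sat_stit_of_sameCell (hh q.1) (hgsat _ q hq rfl)⟩

theorem valid_a3 {p : Ag × Form Ag PVar PConst PropVar}
    {L : List (Ag × Form Ag PVar PConst PropVar)} (hL : ((p :: L).map Prod.fst).Nodup) :
    M.Valid (Form.imp
      (andList (Form.dia (Form.stit p.1 p.2)) (L.map fun q => Form.dia (Form.stit q.1 q.2)))
      (Form.dia (andList (Form.stit p.1 p.2) (L.map fun q => Form.stit q.1 q.2)))) := by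
  intro m h _
  rw [sat_imp, (M.sat_isValuation m h).andList_iff, sat_dia]
  intro hdia
  obtain ⟨g, hg, hsat⟩ := exists_forall_sat_stit hL fun q hq =>
    sat_dia.1 (hdia _ (List.mem_map_of_mem (f := fun q => Form.dia (Form.stit q.1 q.2)) hq))
  exact ⟨g, hg, (M.sat_isValuation m g).andList_iff.2
    (List.forall_mem_map (f := fun q => Form.stit q.1 q.2) (l := p :: L) |>.2 hsat)⟩

theorem valid_ax (M : JstitModel Mo Ag PVar PConst PropVar) (hA : Ax A) : M.Valid A := by
  intro m h hh
  cases hA with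
  | a0 htaut => exact tautology_iff.1 htaut _ (M.sat_isValuation m h)
  | boxK => exact sat_imp.2 fun hAB => sat_imp.2 fun hA g hg => sat_imp.1 (hAB g hg) (hA g hg)
  | boxT => exact sat_imp.2 fun hA => hA h hh
  | box4 => exact sat_imp.2 fun hA _ _ => hA
  | box5 => exact sat_imp.2 fun hA _ _ => hA
  | stitK =>
    simp only [sat_imp, sat_stit_iff]
    exact fun hAB hA g hg => hAB g hg (hA g hg)
  | stitT => exact sat_imp.2 fun hA => sat_stit_iff.1 hA h (.refl hh)
  | stit4 => exact sat_imp.2 fun hA => sat_stit_iff.2 fun g hg => sat_stit_of_sameCell hg hA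
  | stit5 =>
    exact sat_imp.2 fun hA => sat_stit_iff.2 fun g hg hA' => hA (sat_stit_of_sameCell hg.symm hA')
  | a2 => exact sat_imp.2 fun hA => sat_stit_iff.2 fun g hg => hA g hg.mem_right
  | a3 hL => exact valid_a3 hL m h hh
  | a4 =>
    exact sat_imp.2 fun hAB => sat_imp.2 fun hA => ⟨M.ev_app _ _ _ _ _ hAB.1 hA.1,
      fun m' g hR hg => sat_imp.1 (hAB.2 m' g hR hg) (hA.2 m' g hR hg)⟩
  | a5 =>
    exact sat_imp.2 fun hA => ⟨⟨M.ev_bang _ _ _ hA.1, fun m' _ hR _ =>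
      ⟨M.ev_mono _ _ _ hR hA.1, fun m'' g hR' hg => hA.2 m'' g (M.Re_trans hR hR') hg⟩⟩,
      fun m' g hR hg => hA.2 m' g (M.R_sub_Re hR) hg⟩
  | a6 =>
    rw [sat_imp, (M.sat_isValuation m h).or_iff]
    exact Or.rec (fun hA => ⟨M.ev_sum_left _ _ _ hA.1, hA.2⟩)
      fun hA => ⟨M.ev_sum_right _ _ _ hA.1, hA.2⟩
  | knowK =>
    exact sat_imp.2 fun hAB => sat_imp.2 fun hA m' g hR hg =>
      sat_imp.1 (hAB m' g hR hg) (hA m' g hR hg)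
  | knowT => exact sat_imp.2 fun hA => hA m h (M.R_refl m) hh
  | know4 => exact sat_imp.2 fun hA _ _ hR _ m' g hR' hg => hA m' g (M.R_trans hR hR') hg
  | a8 => exact sat_imp.2 fun hA _ _ m' _ hR _ g hg => hA m' g hR hg
  | a9 => exact sat_imp.2 fun ht m' _ hR _ => M.transparent m m' _ (M.R_sub_Re hR) ht

theorem actM_eq_act_of_next {m' : Mo} (hnext : M.Next m m') (hh : h ∈ M.H m') :
    M.ActM m' = M.act m h := by
  have hundiv : ∀ g ∈ M.H m', M.act m h = M.act m g := fun g hg =>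
    M.divide m h g (TemporalFrame.mem_H_of_le hh hnext.1.1)
      (TemporalFrame.mem_H_of_le hg hnext.1.1) ⟨m', hnext.1, hh.2, hg.2⟩
  ext t
  constructor
  · intro ht
    obtain ⟨m'', g, hlt, hg, htg⟩ := M.no_new m' t ht
    rw [hundiv g hg]
    by_cases heq : m'' = m
    · exact heq ▸ htg
    · exact M.expansion m m'' g ⟨hnext.2 m'' hlt, heq⟩
        (TemporalFrame.mem_H_of_le hg hnext.1.1) htg
  · exact fun ht g hg => M.expansion m' m g hnext.1 hg (hundiv g hg ▸ ht)

theorem exists_act_eq_actM (hM : M.MixSucc) (hh : h ∈ M.H m) :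
    ∃ m', h ∈ M.H m' ∧ M.le m m' ∧ M.act m h = M.ActM m' := by
  by_cases hconst : ∀ g ∈ M.H m, M.act m g = M.act m h
  · exact ⟨m, hh, M.le_refl m, Set.ext fun t =>
      ⟨fun ht g hg => (hconst g hg).symm ▸ ht, fun ht => ht h hh⟩⟩
  · push Not at hconst
    obtain ⟨g, hg, hne⟩ := hconst
    obtain ⟨m₁, hm₁, hlt⟩ := TemporalFrame.exists_lt_of_ne hh hg (ne_of_apply_ne _ hne)
    obtain hsucc | hundiv := hM m m₁
    · obtain ⟨m', hle, hnext⟩ := hsucc hlt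
      have hh' : h ∈ M.H m' := TemporalFrame.mem_H_of_le ⟨hh.1, hm₁⟩ hle
      exact ⟨m', hh', hnext.1.1, (actM_eq_act_of_next hnext hh').symm⟩
    · exact (hne (M.divide m g h hg hh (hundiv g hg h hh))).elim

variable {CS : Set (Form Ag PVar PConst PropVar)}

theorem valid_of_mem_constSpec (hCS : IsConstSpec CS) (hN : CSNormal CS M) (hA : A ∈ CS) :
    M.Valid A := by
  have hiter := hCS.1 A hA
  induction hiter with
  | base hax => exact fun m h _ => ⟨hN _ m _ hA, fun m' g _ hg => M.valid_ax hax m' g hg⟩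
  | @step c B hB ih =>
    have hmem : B ∈ CS := by
      cases hB <;> exact hCS.2 _ _ _ hA
    exact fun m h _ => ⟨hN _ m _ hA, fun m' g _ hg => ih hmem m' g hg⟩

variable [Inhabited PropVar]

theorem valid_clause_ann (hM : M.MixSucc) {ts ss : List (Pol PVar PConst)}
    (hvalid : M.Valid
      (Form.imp (Form.know A) (Form.clause (fun t => Form.box (Form.ann t)) ts ss))) :
    M.Valid (Form.imp (Form.know A) (Form.clause Form.ann ts ss)) := by
  intro m h hh
  obtain ⟨m', hh', hle, hact⟩ := exists_act_eq_actM hM hh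
  have hsat := hvalid m' h hh'
  rw [sat_imp, (M.sat_isValuation m' h).clause_iff] at hsat
  rw [sat_imp, (M.sat_isValuation m h).clause_iff]
  intro hA
  simp only [Sat, hact]
  exact hsat fun m'' g hR hg => hA m'' g (M.R_trans (M.le_sub_R hle) hR) hg

theorem valid_of_proves (hCS : IsConstSpec CS) (hM : M.MixSucc) (hN : CSNormal CS M)
    (hA : Proves CS A) : M.Valid A := by
  induction hA with
  | ax hax => exact M.valid_ax hax
  | mp _ _ hAB hA => exact fun m h hh => sat_imp.1 (hAB m h hh) (hA m h hh)
  | nec _ hA => exact fun _ _ _ m' g _ hg => hA m' g hg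
  | rd _ _ hvalid => exact valid_clause_ann hM hvalid
  | rcs hmem => exact valid_of_mem_constSpec hCS hN hmem

end Soundness

end JstitModel

/-! ### Derivability from hypotheses -/

section Entailment

variable {Ag PVar PConst PropVar : Type} [Inhabited PropVar]
  {CS Γ Δ : Set (Form Ag PVar PConst PropVar)} {A B : Form Ag PVar PConst PropVar}
  {L : List (Form Ag PVar PConst PropVar)}

/-- Local derivability of `A` from the hypotheses `Γ` in Σ_D(CS): the rules other than modus ponens
apply to theorems only. -/
def Entails (CS Γ : Set (Form Ag PVar PConst PropVar)) (A : Form Ag PVar PConst PropVar) : Prop :=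
  ∃ L : List (Form Ag PVar PConst PropVar),
    (∀ B ∈ L, B ∈ Γ) ∧ Proves CS (Form.imp (Form.conj L) A)

namespace Entails

theorem of_proves (hA : Proves CS A) : Entails CS Γ A :=
  ⟨[], by simp, .mp (.of_valuation fun v hv => by simp only [hv.imp_iff]; tauto) hA⟩

theorem hyp (hA : A ∈ Γ) : Entails CS Γ A :=
  ⟨[A], by simpa using hA, .of_valuation fun v hv => by simp [hv.imp_iff, hv.conj_iff]⟩

theorem mp : Entails CS Γ (Form.imp A B) → Entails CS Γ A → Entails CS Γ B
  | ⟨K, hK, hAB⟩, ⟨L, hL, hA⟩ => by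
    refine ⟨K ++ L, List.forall_mem_append.2 ⟨hK, hL⟩, ?_⟩
    refine .mp (.mp (.of_valuation fun v hv => ?_) hAB) hA
    simp only [hv.imp_iff, hv.conj_iff, List.forall_mem_append]
    tauto

theorem of_consequence (hL : ∀ B ∈ L, Entails CS Γ B)
    (hA : ∀ v, IsValuation v → (∀ B ∈ L, v B) → v A) : Entails CS Γ A := by
  induction L generalizing A with
  | nil => exact of_proves (.of_valuation fun v hv => hA v hv (by simp))
  | cons B L ih =>
    rw [List.forall_mem_cons] at hL
    refine (ih hL.2 fun v hv hvL => hv.imp_iff.2 fun hvB => ?_).mp hL.1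
    exact hA v hv (List.forall_mem_cons.2 ⟨hvB, hvL⟩)

theorem union_right : Entails CS (Γ ∪ Δ) A →
    ∃ L : List (Form Ag PVar PConst PropVar),
      (∀ B ∈ L, B ∈ Δ) ∧ Entails CS Γ (Form.imp (Form.conj L) A)
  | ⟨L, hL, hA⟩ => by
    classical
    refine ⟨L.filter (· ∈ Δ), by simp, L.filter (· ∉ Δ), fun B hB => ?_, .mp (.of_valuation ?_) hA⟩
    · rw [List.mem_filter, decide_eq_true_eq] at hB
      exact (hL B hB.1).resolve_right hB.2
    · intro v hv
      simp only [hv.imp_iff, hv.conj_iff, List.mem_filter, decide_eq_true_eq]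
      exact fun hLA hout hin => hLA fun B hB =>
        if hBΔ : B ∈ Δ then hin B ⟨hB, hBΔ⟩ else hout B ⟨hB, hBΔ⟩

theorem imp_of_insert (h : Entails CS (insert B Γ) A) : Entails CS Γ (Form.imp B A) := by
  obtain ⟨L, hL, hA⟩ := union_right (Δ := {B}) (Set.union_singleton ▸ h)
  refine of_consequence (List.forall_mem_singleton.2 hA) fun v hv hvA => ?_
  simp only [List.forall_mem_singleton, hv.imp_iff, hv.conj_iff] at hvA ⊢
  exact fun hvB => hvA fun C hC => Set.mem_singleton_iff.1 (hL C hC) ▸ hvB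

theorem exists_of_sUnion {c : Set (Set (Form Ag PVar PConst PropVar))} (hc : IsChain (· ⊆ ·) c)
    (hne : c.Nonempty) : Entails CS (⋃₀ c) A → ∃ Γ ∈ c, Entails CS Γ A
  | ⟨L, hL, hA⟩ =>
    let ⟨Γ, hΓ, hLΓ⟩ := hc.directedOn.exists_mem_subset_of_finite_of_subset_sUnion hne
      L.finite_toSet hL
    ⟨Γ, hΓ, L, hLΓ, hA⟩

end Entails

theorem CSConsistent.not_entails_bot (hcons : ¬ Proves CS Form.bot) (hΓ : CSConsistent CS Γ) :
    ¬ Entails CS Γ Form.bot := by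
  rintro ⟨- | ⟨A, L⟩, hL, hbot⟩
  · refine hcons (.mp hbot (.of_valuation fun v hv => ?_))
    simp [hv.conj_iff]
  · rw [List.forall_mem_cons] at hL
    refine hΓ ⟨A, L, hL.1, hL.2, .mp (.of_valuation fun v hv => ?_) hbot⟩
    simp only [hv.imp_iff, hv.conj_iff, hv.andList_iff, imp_self]

end Entailment

/-! ### Maximal theories -/

section MaximalTheories

variable {Ag PVar PConst PropVar : Type} [Inhabited PropVar]
  {CS Γ Δ : Set (Form Ag PVar PConst PropVar)} {A B : Form Ag PVar PConst PropVar}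
  {L : List (Form Ag PVar PConst PropVar)}

/-- A maximal consistent set of formulas, presented as a valuation satisfying all theorems of
Σ_D(CS). -/
structure MaximalTheory (CS : Set (Form Ag PVar PConst PropVar)) where
  carrier : Set (Form Ag PVar PConst PropVar)
  isValuation_carrier : IsValuation (· ∈ carrier)
  mem_carrier_of_proves : ∀ {A}, Proves CS A → A ∈ carrier

namespace MaximalTheory

instance : SetLike (MaximalTheory CS) (Form Ag PVar PConst PropVar) where
  coe := carrier
  coe_injective := by
    rintro ⟨w, _, _⟩ ⟨u, _, _⟩ rfl
    rfl

variable {w : MaximalTheory CS}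

theorem isValuation (w : MaximalTheory CS) : IsValuation (· ∈ w) := w.isValuation_carrier

theorem mem_of_proves (w : MaximalTheory CS) (hA : Proves CS A) : A ∈ w :=
  w.mem_carrier_of_proves hA

theorem neg_mem_iff : Form.neg A ∈ w ↔ A ∉ w := w.isValuation.neg_iff

theorem mem_of_imp (hAB : Proves CS (Form.imp A B)) (hA : A ∈ w) : B ∈ w :=
  w.isValuation.imp_iff.1 (w.mem_of_proves hAB) hA

end MaximalTheory

namespace Entails

theorem imp_of_not_mem (hΔ : Maximal (¬ Entails CS · A) Δ) (hB : B ∉ Δ) :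
    Entails CS Δ (Form.imp B A) :=
  imp_of_insert (not_not.1 fun h => hB (hΔ.mem_of_prop_insert h))

theorem mem_iff_of_maximal (hΔ : Maximal (¬ Entails CS · A) Δ) : B ∈ Δ ↔ Entails CS Δ B :=
  ⟨hyp, fun h => by_contra fun hB => hΔ.prop ((imp_of_not_mem hΔ hB).mp h)⟩

theorem isValuation_of_maximal (hΔ : Maximal (¬ Entails CS · A) Δ) : IsValuation (· ∈ Δ) where
  and_iff {B C} := by
    constructor
    · intro h
      have hBC : ∀ D ∈ [Form.and B C], Entails CS Δ D := by simpa using hyp h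
      simp only [mem_iff_of_maximal hΔ]
      exact ⟨of_consequence hBC (by simp +contextual [IsValuation.and_iff]),
        of_consequence hBC (by simp +contextual [IsValuation.and_iff])⟩
    · rintro ⟨hB, hC⟩
      rw [mem_iff_of_maximal hΔ]
      exact of_consequence (L := [B, C]) (by simpa using ⟨hyp hB, hyp hC⟩)
        (by simp +contextual [IsValuation.and_iff])
  neg_iff {B} := by
    constructor
    · intro hneg hB
      refine hΔ.prop (of_consequence (L := [Form.neg B, B]) (by simpa using ⟨hyp hneg, hyp hB⟩) ?_)
      simp +contextual [IsValuation.neg_iff]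
    · intro hB
      by_contra hneg
      refine hΔ.prop (of_consequence (L := [Form.imp B A, Form.imp (Form.neg B) A])
        (by simpa using ⟨imp_of_not_mem hΔ hB, imp_of_not_mem hΔ hneg⟩) fun v hv => ?_)
      simp only [List.forall_mem_cons, hv.imp_iff, hv.neg_iff]
      tauto

theorem exists_maximal (hA : ¬ Entails CS Γ A) :
    ∃ Δ, Γ ⊆ Δ ∧ Maximal (¬ Entails CS · A) Δ := by
  refine zorn_subset_nonempty {Δ | ¬ Entails CS Δ A} (fun c hc hchain hne => ?_) Γ hA
  refine ⟨⋃₀ c, fun h => ?_, fun _ => Set.subset_sUnion_of_mem⟩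
  obtain ⟨Δ, hΔ, hΔA⟩ := exists_of_sUnion hchain hne h
  exact hc hΔ hΔA

theorem exists_maximalTheory (hA : ¬ Entails CS Γ A) :
    ∃ w : MaximalTheory CS, Γ ⊆ w ∧ A ∉ w := by
  obtain ⟨Δ, hΓ, hΔ⟩ := exists_maximal hA
  exact ⟨⟨Δ, isValuation_of_maximal hΔ, fun h => (mem_iff_of_maximal hΔ).2 (of_proves h)⟩, hΓ,
    fun h => hΔ.prop (hyp h)⟩

end Entails

/-! ### Normal operators and canonical accessibility -/

/-- `O` obeys the axioms of S4 and the necessitation rule in Σ_D(CS). -/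
structure IsS4 (CS : Set (Form Ag PVar PConst PropVar))
    (O : Form Ag PVar PConst PropVar → Form Ag PVar PConst PropVar) : Prop where
  nec : ∀ {A}, Proves CS A → Proves CS (O A)
  K : ∀ {A B}, Proves CS (Form.imp (O (Form.imp A B)) (Form.imp (O A) (O B)))
  T : ∀ {A}, Proves CS (Form.imp (O A) A)
  four : ∀ {A}, Proves CS (Form.imp (O A) (O (O A)))

/-- `O` obeys the axioms of S5 and the necessitation rule in Σ_D(CS). -/
structure IsS5 (CS : Set (Form Ag PVar PConst PropVar))
    (O : Form Ag PVar PConst PropVar → Form Ag PVar PConst PropVar) : Prop extends IsS4 CS O where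
  five : ∀ {A}, Proves CS (Form.imp (Form.neg (O A)) (O (Form.neg (O A))))

theorem isS4_know : IsS4 CS Form.know :=
  ⟨.nec, .ax .knowK, .ax .knowT, .ax .know4⟩

theorem isS5_box : IsS5 CS Form.box where
  nec h := .mp (.ax .knowT) (.mp (.ax .boxT) (.mp (.ax .a8) h.nec))
  K := .ax .boxK
  T := .ax .boxT
  four := .ax .box4
  five := .ax .box5

theorem isS5_stit (j : Ag) : IsS5 CS (Form.stit j) where
  nec h := .mp (.ax .a2) (isS5_box.nec h)
  K := .ax .stitK
  T := .ax .stitT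
  four := .ax .stit4
  five := .ax .stit5

/-- The formulas that are `O`-necessary in `w`. Canonical accessibility from `w` to `u` along an S4
operator `O` is `w.necessary O ⊆ u.necessary O`, and along an S5 operator it is equality of these
sets. -/
def MaximalTheory.necessary (O : Form Ag PVar PConst PropVar → Form Ag PVar PConst PropVar)
    (w : MaximalTheory CS) : Set (Form Ag PVar PConst PropVar) :=
  {B | O B ∈ w}

variable {O : Form Ag PVar PConst PropVar → Form Ag PVar PConst PropVar}
  {w u : MaximalTheory CS}

namespace IsS4

theorem mono (hO : IsS4 CS O) (hAB : Proves CS (Form.imp A B)) (hA : O A ∈ w) : O B ∈ w :=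
  w.mem_of_imp (.mp hO.K (hO.nec hAB)) hA

theorem necessary_subset (hO : IsS4 CS O) (h : w.necessary O ⊆ u) :
    w.necessary O ⊆ u.necessary O :=
  fun _ hB => h (w.mem_of_imp hO.four hB)

theorem mem_of_imp_mem (hO : IsS4 CS O) (hAB : O (Form.imp A B) ∈ w) (hA : O A ∈ w) : O B ∈ w :=
  w.isValuation.imp_iff.1 (w.mem_of_imp hO.K hAB) hA

theorem conj_mem_iff (hO : IsS4 CS O) : O (Form.conj L) ∈ w ↔ ∀ B ∈ L, O B ∈ w := by
  refine ⟨fun hL B hB => hO.mono (.of_valuation fun v hv => ?_) hL, fun hL => ?_⟩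
  · exact hv.imp_iff.2 fun hvL => hv.conj_iff.1 hvL B hB
  · suffices ∀ C, Proves CS (Form.imp (Form.conj L) C) → O C ∈ w from
      this _ (.of_valuation fun v hv => by rw [hv.imp_iff]; exact id)
    induction L with
    | nil =>
      refine fun C hC => w.mem_of_proves (hO.nec (.mp hC (.of_valuation fun v hv => ?_)))
      simp [hv.conj_iff]
    | cons B L ih =>
      rw [List.forall_mem_cons] at hL
      refine fun C hC => hO.mem_of_imp_mem (ih hL.2 (Form.imp B C) ?_) hL.1
      refine .mp (.of_valuation fun v hv => ?_) hC
      simp only [hv.imp_iff, hv.conj_iff, List.forall_mem_cons]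
      tauto

theorem mem_of_entails (hO : IsS4 CS O) : Entails CS (w.necessary O) A → O A ∈ w
  | ⟨_, hL, hA⟩ => hO.mono hA (hO.conj_mem_iff.2 hL)

theorem mem_iff_forall (hO : IsS4 CS O) :
    O A ∈ w ↔ ∀ u : MaximalTheory CS, w.necessary O ⊆ u.necessary O → A ∈ u := by
  refine ⟨fun hA u hwu => u.mem_of_imp hO.T (hwu hA), fun hA => by_contra fun hn => ?_⟩
  obtain ⟨u, hwu, hu⟩ := Entails.exists_maximalTheory (mt hO.mem_of_entails hn)
  exact hu (hA u (hO.necessary_subset hwu))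

theorem exists_subset_of_forall_list (hO : IsS4 CS O)
    (hΔ : ∀ L : List (Form Ag PVar PConst PropVar), (∀ B ∈ L, B ∈ Δ) →
      ∃ u : MaximalTheory CS, w.necessary O ⊆ u.necessary O ∧ ∀ B ∈ L, B ∈ u) :
    ∃ u : MaximalTheory CS, w.necessary O ⊆ u.necessary O ∧ Δ ⊆ u := by
  have hcons : ¬ Entails CS (w.necessary O ∪ Δ) Form.bot := by
    intro hbot
    obtain ⟨L, hL, hLbot⟩ := hbot.union_right
    obtain ⟨u, hwu, hu⟩ := hΔ L hL
    have himp := hO.mem_iff_forall.1 (hO.mem_of_entails hLbot) u hwu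
    exact u.isValuation.not_bot (u.isValuation.imp_iff.1 himp (u.isValuation.conj_iff.2 hu))
  obtain ⟨u, hu, -⟩ := Entails.exists_maximalTheory hcons
  rw [Set.union_subset_iff] at hu
  exact ⟨u, hO.necessary_subset hu.1, hu.2⟩

end IsS4

namespace IsS5

theorem necessary_eq_of_subset (hO : IsS5 CS O) (hwu : w.necessary O ⊆ u.necessary O) :
    w.necessary O = u.necessary O := by
  refine hwu.antisymm fun B hB => by_contra fun hn => ?_
  have hneg : Form.neg (O B) ∈ w := MaximalTheory.neg_mem_iff.2 hn
  have hneg' : Form.neg (O B) ∈ u := u.mem_of_imp hO.T (hwu (w.mem_of_imp hO.five hneg))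
  exact MaximalTheory.neg_mem_iff.1 hneg' hB

theorem mem_iff_forall (hO : IsS5 CS O) :
    O A ∈ w ↔ ∀ u : MaximalTheory CS, w.necessary O = u.necessary O → A ∈ u :=
  hO.toIsS4.mem_iff_forall.trans
    ⟨fun h u hwu => h u hwu.subset, fun h u hwu => h u (hO.necessary_eq_of_subset hwu)⟩

end IsS5

theorem dia_mem_iff :
    Form.dia A ∈ w ↔
      ∃ u : MaximalTheory CS, w.necessary Form.box = u.necessary Form.box ∧ A ∈ u := by
  rw [Form.dia, MaximalTheory.neg_mem_iff, isS5_box.mem_iff_forall]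
  simp only [not_forall, exists_prop, MaximalTheory.neg_mem_iff, not_not]

theorem necessary_know_subset_of_box_eq (h : w.necessary Form.box = u.necessary Form.box) :
    w.necessary Form.know ⊆ u.necessary Form.know := fun B hB => by
  have hbox : Form.know (Form.box B) ∈ w.necessary Form.box := w.mem_of_imp (.ax .a8) hB
  exact isS4_know.mono isS5_box.T (u.mem_of_imp isS5_box.T (h ▸ hbox :))

theorem necessary_box_eq_of_stit_eq {j : Ag}
    (h : w.necessary (Form.stit j) = u.necessary (Form.stit j)) :
    w.necessary Form.box = u.necessary Form.box := by
  refine isS5_box.necessary_eq_of_subset fun B hB => ?_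
  have hstit : Form.box B ∈ w.necessary (Form.stit j) :=
    w.mem_of_imp (.ax .a2) (w.mem_of_imp isS5_box.four hB)
  exact u.mem_of_imp (isS5_stit j).T (h ▸ hstit :)

theorem know_mem_of_proves_mem {t : Pol PVar PConst} (h : Form.proves t A ∈ w) :
    Form.know A ∈ w :=
  (w.isValuation.and_iff.1 (w.mem_of_imp (.ax .a5) h)).2

theorem proves_mem_of_know_subset {t : Pol PVar PConst}
    (hwu : w.necessary Form.know ⊆ u.necessary Form.know) (h : Form.proves t A ∈ w) :
    Form.proves t A ∈ u := by
  have hbang := (w.isValuation.and_iff.1 (w.mem_of_imp (.ax .a5) h)).1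
  exact u.mem_of_imp isS4_know.T (hwu (know_mem_of_proves_mem hbang))

theorem box_ann_mem_of_know_subset {t : Pol PVar PConst}
    (hwu : w.necessary Form.know ⊆ u.necessary Form.know) (h : Form.box (Form.ann t) ∈ w) :
    Form.box (Form.ann t) ∈ u :=
  u.mem_of_imp isS4_know.T (hwu (w.mem_of_imp (.ax .a9) h))

/-! ### Independence of agents and successor theories -/

theorem exists_box_eq_forall_stit_mem {L : List (Ag × Form Ag PVar PConst PropVar)}
    (hL : (L.map Prod.fst).Nodup)
    (h : ∀ q ∈ L, ∃ u : MaximalTheory CS,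
      w.necessary Form.box = u.necessary Form.box ∧ Form.stit q.1 q.2 ∈ u) :
    ∃ u : MaximalTheory CS,
      w.necessary Form.box = u.necessary Form.box ∧ ∀ q ∈ L, Form.stit q.1 q.2 ∈ u := by
  rcases L with - | ⟨p, L⟩
  · exact ⟨w, rfl, by simp⟩
  have hdia : ∀ q ∈ p :: L, Form.dia (Form.stit q.1 q.2) ∈ w := fun q hq => dia_mem_iff.2 (h q hq)
  rw [← List.forall_mem_map (P := (· ∈ w)), List.map_cons, ← w.isValuation.andList_iff] at hdia
  obtain ⟨u, hwu, hu⟩ := dia_mem_iff.1 (w.mem_of_imp (.ax (.a3 hL)) hdia)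
  rw [u.isValuation.andList_iff] at hu
  exact ⟨u, hwu, List.forall_mem_map (f := fun q => Form.stit q.1 q.2) (l := p :: L) |>.1 hu⟩

theorem exists_box_eq_forall_stit_mem_of_mem {ws : Ag → MaximalTheory CS}
    (hws : ∀ j, w.necessary Form.box = (ws j).necessary Form.box)
    {L : List (Ag × Form Ag PVar PConst PropVar)} (hL : ∀ q ∈ L, Form.stit q.1 q.2 ∈ ws q.1) :
    ∃ u : MaximalTheory CS,
      w.necessary Form.box = u.necessary Form.box ∧ ∀ q ∈ L, Form.stit q.1 q.2 ∈ u := by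
  classical
  -- Axiom (A3) allows one formula per agent, so the formulas of each agent are first conjoined.
  let task (j : Ag) : List (Form Ag PVar PConst PropVar) :=
    (L.filter (·.1 = j)).map Prod.snd
  have mem_task {j : Ag} {B : Form Ag PVar PConst PropVar} : B ∈ task j ↔ (j, B) ∈ L := by
    simp [task]
  have hconj : ∀ j, Form.stit j (Form.conj (task j)) ∈ ws j := fun j =>
    (isS5_stit j).conj_mem_iff.2 fun B hB => hL _ (mem_task.1 hB)
  obtain ⟨u, hwu, hu⟩ := exists_box_eq_forall_stit_mem (w := w)
    (L := (L.map Prod.fst).dedup.map fun j => (j, Form.conj (task j)))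
    (by simpa [Function.comp_def] using List.nodup_dedup _)
    (List.forall_mem_map.2 fun j _ => ⟨ws j, hws j, hconj j⟩)
  refine ⟨u, hwu, fun q hq => ?_⟩
  have hstit : Form.stit q.1 (Form.conj (task q.1)) ∈ u :=
    hu _ (List.mem_map_of_mem (List.mem_dedup.2 (List.mem_map_of_mem hq)))
  exact (isS5_stit q.1).conj_mem_iff.1 hstit _ (mem_task.2 hq)

theorem exists_forall_stit_eq {ws : Ag → MaximalTheory CS}
    (hws : ∀ j, w.necessary Form.box = (ws j).necessary Form.box) :
    ∃ u : MaximalTheory CS, w.necessary Form.box = u.necessary Form.box ∧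
      ∀ j, (ws j).necessary (Form.stit j) = u.necessary (Form.stit j) := by
  let settled : Set (Ag × Form Ag PVar PConst PropVar) := {q | Form.stit q.1 q.2 ∈ ws q.1}
  obtain ⟨u, hwu, hu⟩ := isS5_box.exists_subset_of_forall_list (w := w)
    (Δ := Set.range fun q : settled => Form.stit q.1.1 q.1.2) fun L hL => by
      obtain ⟨K, rfl⟩ : L ∈ Set.range (List.map fun q : settled => Form.stit q.1.1 q.1.2) := by
        rwa [Set.range_list_map]
      obtain ⟨u, hwu, hu⟩ := exists_box_eq_forall_stit_mem_of_mem hws (L := K.map Subtype.val)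
        (List.forall_mem_map.2 fun q _ => q.2)
      refine ⟨u, hwu.subset, List.forall_mem_map.2 fun q hq => hu q.1 (List.mem_map_of_mem hq)⟩
  exact ⟨u, isS5_box.necessary_eq_of_subset hwu, fun j =>
    (isS5_stit j).necessary_eq_of_subset fun B hB => hu ⟨⟨(j, B), hB⟩, rfl⟩⟩

theorem clause_ann_mem {ts ss : List (Pol PVar PConst)}
    (h : Form.know (Form.clause (fun t => Form.box (Form.ann t)) ts ss) ∈ w) :
    Form.clause Form.ann ts ss ∈ w := by
  by_cases hne : ts ++ ss = []
  · obtain ⟨rfl, rfl⟩ := List.append_eq_nil_iff.1 hne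
    exact w.mem_of_imp isS4_know.T h
  · exact w.mem_of_imp (.rd hne isS4_know.T) h

theorem exists_successor (w : MaximalTheory CS) :
    ∃ u : MaximalTheory CS, w.necessary Form.know ⊆ u.necessary Form.know ∧
      ∀ t, Form.box (Form.ann t) ∈ u ↔ Form.ann t ∈ w := by
  classical
  let lit (t : Pol PVar PConst) : Form Ag PVar PConst PropVar :=
    if Form.ann t ∈ w then Form.box (Form.ann t) else Form.neg (Form.box (Form.ann t))
  have lit_mem_iff {u : MaximalTheory CS} {t : Pol PVar PConst} :
      lit t ∈ u ↔ (Form.box (Form.ann t) ∈ u ↔ Form.ann t ∈ w) := by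
    by_cases ht : Form.ann t ∈ w <;> simp [lit, ht, MaximalTheory.neg_mem_iff]
  obtain ⟨u, hwu, hu⟩ := isS4_know.exists_subset_of_forall_list (w := w)
    (Δ := Set.range lit) fun L hL => by
      obtain ⟨ts, rfl⟩ : L ∈ Set.range (List.map lit) := by rwa [Set.range_list_map]
      by_contra! hcon
      have hclause : Form.clause Form.ann (ts.filter (Form.ann · ∈ w))
          (ts.filter (Form.ann · ∉ w)) ∈ w := by
        refine clause_ann_mem (isS4_know.mem_iff_forall.2 fun u hwu => ?_)
        rw [u.isValuation.clause_iff]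
        obtain ⟨B, hB, hBu⟩ := hcon u hwu
        obtain ⟨t, ht, rfl⟩ := List.mem_map.1 hB
        rw [lit_mem_iff] at hBu
        simp only [List.mem_filter, decide_eq_true_eq]
        by_cases hw : Form.ann t ∈ w
        · exact .inl ⟨t, ⟨ht, hw⟩, fun hbox => hBu (iff_of_true hbox hw)⟩
        · exact .inr ⟨t, ⟨ht, hw⟩, by_contra fun hbox => hBu (iff_of_false hbox hw)⟩
      rw [w.isValuation.clause_iff] at hclause
      simp only [List.mem_filter, decide_eq_true_eq] at hclause
      obtain ⟨t, ht, hn⟩ | ⟨t, ht, hw⟩ := hclause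
      exacts [hn ht.2, ht.2 hw]
  exact ⟨u, hwu, fun t => lit_mem_iff.1 (hu (Set.mem_range_self t))⟩

/-! ### A model without proofs -/

/-- The model on `T` in which no proof is ever presented and everything counts as evidence for
everything. It refutes every formula `□Et`, in all constant specifications at once. -/
def JstitModel.silent {Mo : Type} (T : TemporalFrame Mo) :
    JstitModel Mo Ag PVar PConst PropVar where
  toStitFrame := .ofLabel T (fun _ _ _ => ()) (fun _ _ _ => rfl) fun m _ _ =>
    (T.H_nonempty m).imp fun _ hh => ⟨hh, fun _ => rfl⟩
  R _ _ := True
  Re _ _ := True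
  R_refl _ := trivial
  R_trans _ _ := trivial
  Re_refl _ := trivial
  Re_trans _ _ := trivial
  R_sub_Re _ := trivial
  le_sub_R _ := trivial
  act _ _ := ∅
  ev _ _ := Set.univ
  val _ := ∅
  ev_mono _ _ _ _ := subset_rfl
  ev_app _ _ _ _ _ _ _ := trivial
  ev_sum_left _ _ _ := subset_rfl
  ev_sum_right _ _ _ := subset_rfl
  ev_bang _ _ _ _ := trivial
  expansion _ _ _ _ _ := subset_rfl
  no_new m _ ht := (T.H_nonempty m).elim fun h hh => (ht h hh).elim
  divide _ _ _ _ _ _ := rfl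
  transparent m _ _ _ ht := (T.H_nonempty m).elim fun h hh => (ht h hh).elim

theorem Entails.sat {Mo : Type} {M : JstitModel Mo Ag PVar PConst PropVar} {m : Mo} {h : Set Mo}
    (hCS : IsConstSpec CS) (hM : M.MixSucc) (hN : CSNormal CS M) (hh : h ∈ M.H m)
    (hΓ : ∀ B ∈ Γ, M.Sat B m h) : Entails CS Γ A → M.Sat A m h
  | ⟨_, hL, hA⟩ => JstitModel.sat_imp.1 (JstitModel.valid_of_proves hCS hM hN hA m h hh) <|
      (M.sat_isValuation m h).conj_iff.2 fun B hB => hΓ B (hL B hB)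

/-- A theory is silent if it guarantees the presentation of no proof. Such theories may label the
first moments of a model, where no proof can have been presented before. -/
def MaximalTheory.Silent (w : MaximalTheory CS) : Prop := ∀ t, Form.box (Form.ann t) ∉ w

theorem not_entails_neg_box_ann_bot (hCS : IsConstSpec CS) :
    ¬ Entails CS (Set.range fun t => Form.neg (Form.box (Form.ann t))) Form.bot := by
  let T := ChainTree.frame fun _ _ : Unit => True
  let M : JstitModel _ Ag PVar PConst PropVar := .silent T
  obtain ⟨m⟩ := T.nonempty
  obtain ⟨h, hh⟩ := T.H_nonempty m
  refine fun hbot => (M.sat_isValuation m h).not_bot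
    (hbot.sat hCS (ChainTree.mixSucc_frame _) (fun _ _ _ _ => trivial) hh ?_)
  rintro _ ⟨t, rfl⟩ hbox
  exact hbox h hh

theorem exists_silent (hCS : IsConstSpec CS) : ∃ w : MaximalTheory CS, w.Silent := by
  obtain ⟨w, hw, -⟩ := Entails.exists_maximalTheory (not_entails_neg_box_ann_bot hCS)
  exact ⟨w, fun t => MaximalTheory.neg_mem_iff.1 (hw ⟨t, rfl⟩)⟩

theorem not_proves_bot (hCS : IsConstSpec CS) : ¬ Proves CS Form.bot :=
  fun hbot => not_entails_neg_box_ann_bot hCS (.of_proves hbot)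

theorem CSConsistent.of_sat {Mo : Type} {M : JstitModel Mo Ag PVar PConst PropVar} {m : Mo}
    {h : Set Mo} (hCS : IsConstSpec CS) (hM : M.MixSucc) (hN : CSNormal CS M) (hh : h ∈ M.H m)
    (hΓ : ∀ B ∈ Γ, M.Sat B m h) : CSConsistent CS Γ := by
  rintro ⟨A, L, hA, hL, hbot⟩
  have hv := M.sat_isValuation m h
  have hval := JstitModel.valid_of_proves hCS hM hN hbot m h hh
  exact hv.not_bot (hv.imp_iff.1 hval (hv.andList_iff.2
    (List.forall_mem_cons.2 ⟨hΓ A hA, fun B hB => hΓ B (hL B hB)⟩)))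

/-! ### The canonical model -/

/-- An entry of a canonical moment: the theory `here` holding, along the chosen histories, at the
moment from which the step is made, and a theory `next` whose historical necessities are settled at
the moment reached. -/
structure Step (CS : Set (Form Ag PVar PConst PropVar)) where
  here : MaximalTheory CS
  next : MaximalTheory CS

/-- `b.Follows a`: the step `b` may be made at the moment reached by the step `a`. The proofs
presented on the way are exactly those whose presentation becomes settled. -/
structure Step.Follows (b a : Step CS) : Prop where
  box_eq : a.next.necessary Form.box = b.here.necessary Form.box
  know_subset : b.here.necessary Form.know ⊆ b.next.necessary Form.know
  ann_iff : ∀ t, Form.box (Form.ann t) ∈ b.next ↔ Form.ann t ∈ b.here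

theorem Step.exists_follows {a : Step CS}
    (hw : a.next.necessary Form.box = w.necessary Form.box) :
    ∃ b : Step CS, b.here = w ∧ b.Follows a := by
  obtain ⟨u, hwu, hann⟩ := exists_successor w
  exact ⟨⟨w, u⟩, rfl, hw, hwu, hann⟩

theorem Step.follows_serial (a : Step CS) : ∃ b : Step CS, b.Follows a :=
  (exists_follows rfl).imp fun _ hb => hb.2

/-- The moments of the canonical model. -/
abbrev CanonicalMoment (CS : Set (Form Ag PVar PConst PropVar)) : Type :=
  ChainTree (Step.Follows (CS := CS))

/-- The temporal frame of the canonical model. -/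
abbrev canonicalTime (CS : Set (Form Ag PVar PConst PropVar)) :
    TemporalFrame (CanonicalMoment CS) :=
  ChainTree.frame Step.Follows

namespace CanonicalMoment

variable {m m' m₁ m₂ m₃ : CanonicalMoment CS} {h g : Set (CanonicalMoment CS)} {s : Step CS}
  {t : Pol PVar PConst} {j : Ag}

/-- Canonical epistemic accessibility: whatever is known at `m` is known at `m'`. Nothing is known
at the root beyond the theorems, so it accesses every moment. -/
def Access (m m' : CanonicalMoment CS) : Prop :=
  ∀ s ∈ m.last?, ∃ s' ∈ m'.last?, s.next.necessary Form.know ⊆ s'.next.necessary Form.know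

theorem Access.refl (m : CanonicalMoment CS) : m.Access m := fun s hs => ⟨s, hs, subset_rfl⟩

theorem Access.trans (h₁₂ : m₁.Access m₂) (h₂₃ : m₂.Access m₃) : m₁.Access m₃ := fun s hs =>
  let ⟨s', hs', hss'⟩ := h₁₂ s hs
  let ⟨s'', hs'', hs's''⟩ := h₂₃ s' hs'
  ⟨s'', hs'', hss'.trans hs's''⟩

theorem Access.of_child (hc : m.Child s m') : m.Access m' := fun s' hs' =>
  have hfollows := hc.rel s' hs'
  ⟨s, hc.last?_eq, (necessary_know_subset_of_box_eq hfollows.box_eq).trans hfollows.know_subset⟩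

theorem Access.of_le (hle : (canonicalTime CS).le m m') : m.Access m' := by
  have hgen := ChainTree.reflTransGen_child_of_le hle
  clear hle
  induction hgen with
  | refl => exact .refl m
  | tail _ hchild ih => exact ih.trans (.of_child hchild.choose_spec)

variable [Nonempty (Step CS)]

theorem stepAt_follows (hs : s ∈ m.last?) (hh : h ∈ (canonicalTime CS).H m) :
    (m.stepAt h).Follows s :=
  ChainTree.stepAt_rel Step.follows_serial hh s hs

theorem exists_here_eq (hs : s ∈ m.last?)
    (hw : s.next.necessary Form.box = w.necessary Form.box) :
    ∃ h ∈ (canonicalTime CS).H m, (m.stepAt h).here = w := by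
  obtain ⟨b, rfl, hb⟩ := Step.exists_follows hw
  obtain ⟨h, hh, rfl⟩ := ChainTree.exists_stepAt_eq (m := m) (a := b)
    fun s' hs' => Option.mem_unique hs hs' ▸ hb
  exact ⟨h, hh, rfl⟩

theorem know_subset_of_access (hs : s ∈ m.last?) (hacc : m.Access m')
    (hh : h ∈ (canonicalTime CS).H m) (hg : g ∈ (canonicalTime CS).H m') :
    (m.stepAt h).here.necessary Form.know ⊆ (m'.stepAt g).here.necessary Form.know := by
  obtain ⟨s', hs', hss'⟩ := hacc s hs
  exact (necessary_know_subset_of_box_eq (stepAt_follows hs hh).box_eq.symm).trans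
    (hss'.trans (necessary_know_subset_of_box_eq (stepAt_follows hs' hg).box_eq))

theorem exists_access_here_eq (hs : s ∈ m.last?) (hh : h ∈ (canonicalTime CS).H m)
    (hu : (m.stepAt h).here.necessary Form.know ⊆ u.necessary Form.know) :
    ∃ m' : CanonicalMoment CS, m.Access m' ∧ (∃ s', s' ∈ m'.last?) ∧
      ∃ g ∈ (canonicalTime CS).H m', (m'.stepAt g).here = u := by
  obtain ⟨m', hm'⟩ := ChainTree.exists_last?_eq (r := Step.Follows) (Step.mk u u)
  refine ⟨m', fun s' hs' => ⟨_, hm', ?_⟩, ⟨_, hm'⟩, exists_here_eq hm' rfl⟩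
  obtain rfl := Option.mem_unique hs hs'
  exact (necessary_know_subset_of_box_eq (stepAt_follows hs hh).box_eq).trans hu

/-- The proofs presented at `m` along `h`. -/
def presented (m : CanonicalMoment CS) (h : Set (CanonicalMoment CS)) : Set (Pol PVar PConst) :=
  {t | Form.box (Form.ann t) ∈ (m.stepAt h).next}

theorem mem_presented_iff (hs : s ∈ m.last?) (hh : h ∈ (canonicalTime CS).H m) :
    t ∈ m.presented h ↔ Form.ann t ∈ (m.stepAt h).here :=
  (stepAt_follows hs hh).ann_iff t

theorem forall_mem_presented_iff_of_mem (hs : s ∈ m.last?) :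
    (∀ h ∈ (canonicalTime CS).H m, t ∈ m.presented h) ↔ Form.box (Form.ann t) ∈ s.next := by
  rw [isS5_box.mem_iff_forall]
  constructor
  · intro ht u hu
    obtain ⟨h, hh, rfl⟩ := exists_here_eq hs hu
    exact (mem_presented_iff hs hh).1 (ht h hh)
  · exact fun ht h hh => (mem_presented_iff hs hh).2 (ht _ (stepAt_follows hs hh).box_eq)

theorem forall_mem_presented_iff (hsilent : ∃ w : MaximalTheory CS, w.Silent) :
    (∀ h ∈ (canonicalTime CS).H m, t ∈ m.presented h) ↔
      ∃ s ∈ m.last?, Form.box (Form.ann t) ∈ s.next := by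
  cases hm : m.last? with
  | none =>
    obtain ⟨w, hw⟩ := hsilent
    obtain ⟨h, hh, heq⟩ := ChainTree.exists_stepAt_eq (m := m) (a := Step.mk w w) (by simp [hm])
    refine iff_of_false (fun ht => hw t ?_) (by simp)
    have hmem : Form.box (Form.ann t) ∈ (m.stepAt h).next := ht h hh
    rwa [heq] at hmem
  | some s => simpa using forall_mem_presented_iff_of_mem hm

theorem forall_mem_presented_of_access (hsilent : ∃ w : MaximalTheory CS, w.Silent)
    (hacc : m.Access m') (ht : ∀ h ∈ (canonicalTime CS).H m, t ∈ m.presented h) :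
    ∀ h ∈ (canonicalTime CS).H m', t ∈ m'.presented h := by
  rw [forall_mem_presented_iff hsilent] at ht ⊢
  obtain ⟨s, hs, hbox⟩ := ht
  obtain ⟨s', hs', hss'⟩ := hacc s hs
  exact ⟨s', hs', box_ann_mem_of_know_subset hss' hbox⟩

theorem presented_subset_of_lt (hsilent : ∃ w : MaximalTheory CS, w.Silent)
    (hlt : (canonicalTime CS).lt m m') (hh : h ∈ (canonicalTime CS).H m') :
    m.presented h ⊆ m'.presented h := by
  intro t ht
  obtain ⟨m₁, hc, hle⟩ := ChainTree.exists_child_eq_stepAt_of_lt hh hlt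
  exact forall_mem_presented_of_access hsilent (.of_le hle)
    ((forall_mem_presented_iff_of_mem hc.last?_eq).2 ht) h hh

theorem exists_lt_mem_presented (hsilent : ∃ w : MaximalTheory CS, w.Silent)
    (ht : ∀ h ∈ (canonicalTime CS).H m, t ∈ m.presented h) :
    ∃ m' h, (canonicalTime CS).lt m' m ∧ h ∈ (canonicalTime CS).H m ∧ t ∈ m'.presented h := by
  obtain ⟨s, hs, hbox⟩ := (forall_mem_presented_iff hsilent).1 ht
  obtain ⟨m', hc⟩ := ChainTree.exists_child_eq hs
  obtain ⟨h, hh⟩ := (canonicalTime CS).H_nonempty m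
  refine ⟨m', h, hc.next.1, hh, ?_⟩
  rwa [presented, Set.mem_ofPred_eq, ChainTree.stepAt_eq hh.1 hh.2 hc]

/-- The value classifying the histories through `m` into the choice cells of `j`. At the root it is
constant, which makes all choices trivial there. -/
def choiceLabel (m : CanonicalMoment CS) (j : Ag) (h : Set (CanonicalMoment CS)) :
    Option (Set (Form Ag PVar PConst PropVar)) :=
  m.last?.map fun _ => (m.stepAt h).here.necessary (Form.stit j)

theorem choiceLabel_eq_iff (hs : s ∈ m.last?) :
    m.choiceLabel j g = m.choiceLabel j h ↔
      (m.stepAt g).here.necessary (Form.stit j) = (m.stepAt h).here.necessary (Form.stit j) := by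
  simp [choiceLabel, Option.mem_def.1 hs]

theorem exists_forall_choiceLabel_eq (m : CanonicalMoment CS)
    {g : Ag → Set (CanonicalMoment CS)} (hg : ∀ j, g j ∈ (canonicalTime CS).H m) :
    ∃ h ∈ (canonicalTime CS).H m, ∀ j, m.choiceLabel j h = m.choiceLabel j (g j) := by
  cases hm : m.last? with
  | none => exact ((canonicalTime CS).H_nonempty m).imp fun h hh =>
      ⟨hh, fun j => by simp only [choiceLabel, hm, Option.map_none]⟩
  | some s =>
    obtain ⟨u, hu, hstit⟩ := exists_forall_stit_eq fun j => (stepAt_follows hm (hg j)).box_eq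
    obtain ⟨h, hh, rfl⟩ := exists_here_eq hm hu
    exact ⟨h, hh, fun j => (choiceLabel_eq_iff hm).2 (hstit j).symm⟩

end CanonicalMoment

section CanonicalModel

open CanonicalMoment

variable [Nonempty (Step CS)]

/-- The stit frame of the canonical model. -/
def canonicalFrame (CS : Set (Form Ag PVar PConst PropVar)) [Nonempty (Step CS)] :
    StitFrame (CanonicalMoment CS) Ag :=
  .ofLabel (canonicalTime CS) choiceLabel
    (fun hg hh hu => by simp only [choiceLabel, ChainTree.stepAt_eq_of_undiv hg hh hu])
    (fun m _ => exists_forall_choiceLabel_eq m)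

theorem sameCell_canonicalFrame_iff {m : CanonicalMoment CS} {g h : Set (CanonicalMoment CS)}
    {s : Step CS} {j : Ag} (hs : s ∈ m.last?) :
    (canonicalFrame CS).SameCell m j g h ↔
      g ∈ (canonicalTime CS).H m ∧ h ∈ (canonicalTime CS).H m ∧
        (m.stepAt g).here.necessary (Form.stit j) = (m.stepAt h).here.necessary (Form.stit j) :=
  StitFrame.sameCell_ofLabel.trans
    (and_congr_right' (and_congr_right' (choiceLabel_eq_iff hs)))

/-- The canonical model. Formulas hold as prescribed by `here` at all moments except the root, which
only serves to connect the histories. -/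
def canonicalModel (hsilent : ∃ w : MaximalTheory CS, w.Silent) :
    JstitModel (CanonicalMoment CS) Ag PVar PConst PropVar where
  toStitFrame := canonicalFrame CS
  R := Access
  Re := Access
  R_refl := .refl
  R_trans := .trans
  Re_refl := .refl
  Re_trans := .trans
  R_sub_Re := id
  le_sub_R := .of_le
  act := presented
  ev m t := {A | ∀ w : MaximalTheory CS,
    (∀ s ∈ m.last?, s.next.necessary Form.know ⊆ w.necessary Form.know) → Form.proves t A ∈ w}
  val p := {x | Form.pv p ∈ (x.1.stepAt x.2).here}
  ev_mono _ _ _ hacc _ hA w hw := hA w fun s hs =>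
    let ⟨s', hs', hss'⟩ := hacc s hs
    hss'.trans (hw s' hs')
  ev_app _ _ _ _ _ hAB hA w hw := w.isValuation.imp_iff.1 (w.mem_of_imp (.ax .a4) (hAB w hw))
    (hA w hw)
  ev_sum_left _ _ _ _ hA w hw := w.mem_of_imp (.ax .a6) (w.isValuation.or_iff.2 (.inl (hA w hw)))
  ev_sum_right _ _ _ _ hA w hw := w.mem_of_imp (.ax .a6) (w.isValuation.or_iff.2 (.inr (hA w hw)))
  ev_bang _ _ _ hA w hw := (w.isValuation.and_iff.1 (w.mem_of_imp (.ax .a5) (hA w hw))).1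
  expansion _ _ _ hlt hh := presented_subset_of_lt hsilent hlt hh
  no_new _ _ ht := exists_lt_mem_presented hsilent ht
  divide _ _ _ hg hh hu := by simp only [presented, ChainTree.stepAt_eq_of_undiv hg hh hu]
  transparent _ _ _ hacc ht := forall_mem_presented_of_access hsilent hacc ht

/-! ### The truth lemma -/

/-- The truth lemma for `A`: off the root, `A` is satisfied exactly where it belongs to the theory
labelling the moment and the history. -/
def TruthLemma (hsilent : ∃ w : MaximalTheory CS, w.Silent)
    (A : Form Ag PVar PConst PropVar) : Prop :=
  ∀ {m : CanonicalMoment CS} {h : Set (CanonicalMoment CS)} {s : Step CS}, s ∈ m.last? →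
    h ∈ (canonicalTime CS).H m → ((canonicalModel hsilent).Sat A m h ↔ A ∈ (m.stepAt h).here)

namespace TruthLemma

variable {hsilent : ∃ w : MaximalTheory CS, w.Silent} {j : Ag} {t : Pol PVar PConst}

theorem box (hA : TruthLemma hsilent A) : TruthLemma hsilent (Form.box A) := by
  intro m h s hs hh
  rw [isS5_box.mem_iff_forall]
  constructor
  · intro hsat u hu
    obtain ⟨g, hg, rfl⟩ := exists_here_eq hs ((stepAt_follows hs hh).box_eq.trans hu)
    exact (hA hs hg).1 (hsat g hg)
  · exact fun hmem g hg => (hA hs hg).2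
      (hmem _ ((stepAt_follows hs hh).box_eq.symm.trans (stepAt_follows hs hg).box_eq))

theorem stit (hA : TruthLemma hsilent A) : TruthLemma hsilent (Form.stit j A) := by
  intro m h s hs hh
  simp only [JstitModel.sat_stit_iff, canonicalModel, sameCell_canonicalFrame_iff hs]
  rw [(isS5_stit j).mem_iff_forall]
  constructor
  · intro hsat u hu
    obtain ⟨g, hg, rfl⟩ := exists_here_eq hs
      ((stepAt_follows hs hh).box_eq.trans (necessary_box_eq_of_stit_eq hu))
    exact (hA hs hg).1 (hsat g ⟨hh, hg, hu⟩)
  · exact fun hmem g ⟨_, hg, hstit⟩ => (hA hs hg).2 (hmem _ hstit)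

theorem know (hA : TruthLemma hsilent A) : TruthLemma hsilent (Form.know A) := by
  intro m h s hs hh
  rw [isS4_know.mem_iff_forall]
  constructor
  · intro hsat u hu
    obtain ⟨m', hacc, ⟨s', hs'⟩, g, hg, rfl⟩ := exists_access_here_eq hs hh hu
    exact (hA hs' hg).1 (hsat m' g hacc hg)
  · intro hmem m' g hacc hg
    obtain ⟨s', hs', -⟩ := hacc s hs
    exact (hA hs' hg).2 (hmem _ (know_subset_of_access hs hacc hh hg))

theorem proves (hA : TruthLemma hsilent A) : TruthLemma hsilent (Form.proves t A) := by
  intro m h s hs hh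
  have hbox := (stepAt_follows hs hh).box_eq
  constructor
  · rintro ⟨hev, -⟩
    refine hev _ fun s' hs' => ?_
    obtain rfl := Option.mem_unique hs hs'
    exact necessary_know_subset_of_box_eq hbox
  · intro hmem
    refine ⟨fun u hu => ?_, (know hA hs hh).2 (know_mem_of_proves_mem hmem)⟩
    exact proves_mem_of_know_subset
      ((necessary_know_subset_of_box_eq hbox.symm).trans (hu s hs)) hmem

end TruthLemma

theorem truthLemma (hsilent : ∃ w : MaximalTheory CS, w.Silent)
    (A : Form Ag PVar PConst PropVar) : TruthLemma hsilent A := by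
  induction A with
  | pv p => exact fun _ _ => Iff.rfl
  | and A B hA hB => exact fun {m h _} hs hh =>
      (and_congr (hA hs hh) (hB hs hh)).trans (m.stepAt h).here.isValuation.and_iff.symm
  | neg A hA => exact fun hs hh => (not_congr (hA hs hh)).trans MaximalTheory.neg_mem_iff.symm
  | stit j A hA => exact hA.stit
  | box A hA => exact hA.box
  | proves t A hA => exact hA.proves
  | know A hA => exact hA.know
  | ann t => exact mem_presented_iff

end CanonicalModel

theorem CSConsistent.exists_sat (hCS : IsConstSpec CS) (hΓ : CSConsistent CS Γ) :
    ∃ (Mo : Type) (M : JstitModel Mo Ag PVar PConst PropVar),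
      M.MixSucc ∧ M.toJstitFrame.Unirelational ∧ CSNormal CS M ∧
      ∃ m h, h ∈ M.H m ∧ ∀ A ∈ Γ, M.Sat A m h := by
  obtain ⟨w, hΓw, -⟩ := Entails.exists_maximalTheory (hΓ.not_entails_bot (not_proves_bot hCS))
  have : Nonempty (Step CS) := ⟨⟨w, w⟩⟩
  obtain ⟨m, hm⟩ := ChainTree.exists_last?_eq (r := Step.Follows) (Step.mk w w)
  obtain ⟨h, hh, heq⟩ := CanonicalMoment.exists_here_eq hm rfl
  refine ⟨_, canonicalModel (exists_silent hCS), ChainTree.mixSucc_frame _, fun _ _ => id,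
    fun _ _ _ hA u _ => u.mem_of_proves (.rcs hA), m, h, hh, fun A hA => ?_⟩
  exact (truthLemma _ A hm hh).2 (heq ▸ hΓw hA)

end MaximalTheories

theorem stmt8_general {Ag PVar PConst PropVar : Type} [Inhabited PropVar]
    (CS : Set (Form Ag PVar PConst PropVar)) (hCS : IsConstSpec CS)
    (Γ : Set (Form Ag PVar PConst PropVar)) :
    (CSConsistent CS Γ ↔
      ∃ (Mo : Type) (M : JstitModel Mo Ag PVar PConst PropVar),
        M.MixSucc ∧ CSNormal CS M ∧ ∃ m h, h ∈ M.H m ∧ ∀ A ∈ Γ, M.Sat A m h) ∧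
    (CSConsistent CS Γ ↔
      ∃ (Mo : Type) (M : JstitModel Mo Ag PVar PConst PropVar),
        M.MixSucc ∧ M.toJstitFrame.Unirelational ∧ CSNormal CS M ∧
        ∃ m h, h ∈ M.H m ∧ ∀ A ∈ Γ, M.Sat A m h) := by
  refine ⟨⟨fun hΓ => ?_, ?_⟩, ⟨CSConsistent.exists_sat hCS, ?_⟩⟩
  · obtain ⟨Mo, M, hM, -, hsat⟩ := hΓ.exists_sat hCS
    exact ⟨Mo, M, hM, hsat⟩
  · exact fun ⟨_, _, hM, hN, _, _, hh, hsat⟩ => .of_sat hCS hM hN hh hsat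
  · exact fun ⟨_, _, hM, _, hN, _, _, hh, hsat⟩ => .of_sat hCS hM hN hh hsat

/-- Corollary 1: Γ is CS-consistent iff it is satisfiable in the class of
CS-normal jstit models based on mixed successor temporal frames for Ag, iff it is
satisfiable in the subclass of unirelational such models. (A model is based on a
temporal frame from the class iff its underlying temporal frame is a mixed successor
frame.) -/
theorem stmt8 {Ag PVar PConst PropVar : Type} [Finite Ag]
    [Countable PVar] [Infinite PVar] [Countable PConst] [Infinite PConst]
    [Countable PropVar] [Infinite PropVar] [Inhabited PropVar]
    (CS : Set (Form Ag PVar PConst PropVar)) (hCS : IsConstSpec CS)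
    (Γ : Set (Form Ag PVar PConst PropVar)) :
    (CSConsistent CS Γ ↔
      ∃ (Mo : Type) (M : JstitModel Mo Ag PVar PConst PropVar),
        M.toTemporalFrame.MixSucc ∧ CSNormal CS M ∧
        ∃ m h, h ∈ M.toTemporalFrame.H m ∧ ∀ A ∈ Γ, M.Sat A m h) ∧
    (CSConsistent CS Γ ↔
      ∃ (Mo : Type) (M : JstitModel Mo Ag PVar PConst PropVar),
        M.toTemporalFrame.MixSucc ∧ M.toJstitFrame.Unirelational ∧ CSNormal CS M ∧
        ∃ m h, h ∈ M.toTemporalFrame.H m ∧ ∀ A ∈ Γ, M.Sat A m h) := by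
  exact stmt8_general CS hCS Γ
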